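/- Let m ≥ 2 and t ≥ 2. The group homomorphism ψ : B(Ã_{m−1}) → B(Ã_{tm−1}) determined by ψ(s_i) = s_i s_{i+m} s_{i+2m} ⋯ s_{i+(t−1)m} for i ∈ ℤ/m (where the generators on the right are indexed by the corresponding residues in ℤ/tm) is well defined and injective. -/

import Mathlib

/-- The braid relation word `s_i s_j s_i (s_j s_i s_j)⁻¹` in a free group. -/
def braidRelWord {I : Type*} (i j : I) : FreeGroup I :=
  FreeGroup.of i * FreeGroup.of j * FreeGroup.of i *
    (FreeGroup.of j * FreeGroup.of i * FreeGroup.of j)⁻¹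

/-- The commutation relation word `s_i s_j (s_j s_i)⁻¹` in a free group. -/
def commRelWord {I : Type*} (i j : I) : FreeGroup I :=
  FreeGroup.of i * FreeGroup.of j * (FreeGroup.of j * FreeGroup.of i)⁻¹

/-- The defining relations of the affine braid group `B(Ã_{n-1})`: for `n ≥ 3` the braid
relations `s_i s_{i+1} s_i = s_{i+1} s_i s_{i+1}` (`i ∈ ℤ/n`) and the commutation relations
`s_i s_j = s_j s_i` for `i - j ≠ ±1`; for `n = 2` there are no relations, so that
`B(Ã_1)` is the free group on two generators. -/
def affineBraidRels (n : ℕ) : Set (FreeGroup (ZMod n)) :=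
  if n ≤ 2 then ∅
  else {r | (∃ i : ZMod n, r = braidRelWord i (i + 1)) ∨
            (∃ i j : ZMod n, i - j ≠ 1 ∧ i - j ≠ -1 ∧ r = commRelWord i j)}

/-- The affine braid group `B(Ã_{n-1})`. -/
abbrev AffineBraidGroup (n : ℕ) := PresentedGroup (affineBraidRels n)

/-- The generator `s_i` of the affine braid group `B(Ã_{n-1})`, `i ∈ ℤ/n`. -/
def affineBraidGen (n : ℕ) (i : ZMod n) : AffineBraidGroup n := PresentedGroup.of i

/-- The element `g_i = s_i s_{i+m} s_{i+2m} ⋯ s_{i+(t-1)m}` of the affine braid group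
`B(Ã_{tm−1})`, for `i ∈ ℤ/m` (the generators on the right indexed by the corresponding
residues in `ℤ/tm`). -/
def liftedGen (m t : ℕ) (i : ZMod m) : AffineBraidGroup (t * m) :=
  ((List.range t).map fun s =>
    affineBraidGen (t * m) ((i.val + s * m : ℕ) : ZMod (t * m))).prod

/-- The elements `q 0, …, q (n - 1)` satisfy the braid relations of type `A`. -/
structure IsBraidChain {G : Type*} [Group G] (q : ℕ → G) (n : ℕ) : Prop where
  braid : ∀ i, i + 1 < n → q i * q (i + 1) * q i = q (i + 1) * q i * q (i + 1)
  comm : ∀ i j, i + 1 < j → j < n → Commute (q i) (q j)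

/-- The elements `b, r 0, …, r (n - 1)` satisfy the braid relations of type `B`, where `b` is the
generator at the end of the double edge. -/
structure IsTypeBChain {G : Type*} [Group G] (r : ℕ → G) (b : G) (n : ℕ) : Prop
    extends IsBraidChain r n where
  quartic : 0 < n → r 0 * b * r 0 * b = b * r 0 * b * r 0
  comm_end : ∀ i, 0 < i → i < n → Commute b (r i)

section TypeB

variable {G : Type*} [Group G]

/-- The conjugates `y 0 = b`, `y (d + 1) = (r d)⁻¹ * y d * r d` generating the free normal subgroup
of an Artin group of type `B`. -/
def pushGen (r : ℕ → G) (b : G) : ℕ → G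
  | 0 => b
  | d + 1 => (r d)⁻¹ * pushGen r b d * r d

variable {r : ℕ → G} {b : G} {n : ℕ}

lemma IsTypeBChain.commute_pushGen_of_lt (h : IsTypeBChain r b n) {i j : ℕ} (hj : j < i)
    (hi : i < n) : Commute (pushGen r b j) (r i) := by
  induction j with
  | zero => exact h.comm_end i hj hi
  | succ j ih =>
    have h1 := h.comm j i hj hi
    exact (h1.inv_left.mul_left (ih (by omega))).mul_left h1

lemma IsTypeBChain.commute_pushGen_of_succ_lt (h : IsTypeBChain r b n) {i j : ℕ} (hi : i + 1 < j)
    (hj : j ≤ n) : Commute (pushGen r b j) (r i) := by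
  induction j, hi using Nat.le_induction with
  | base =>
    have h1 : Commute (pushGen r b i) (r (i + 1)) := h.commute_pushGen_of_lt (by omega) (by omega)
    have h2 := h.braid i (by omega)
    have h3 : r i * r (i + 1) * r i = r (i + 1) * (r i * r (i + 1)) := by rw [h2, mul_assoc]
    have e : pushGen r b (i + 1 + 1) = (r i * r (i + 1))⁻¹ * pushGen r b i * (r i * r (i + 1)) := by
      simp only [pushGen]; group
    have e2 : r i = (r i * r (i + 1))⁻¹ * r (i + 1) * (r i * r (i + 1)) := by
      rw [mul_assoc, ← h3]; group
    rw [e]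
    conv_rhs => rw [e2]
    have := (Commute.conj_iff (r i * r (i + 1))⁻¹).2 h1
    simpa using this
  | succ j hj' ih =>
    have h1 : Commute (r j) (r i) := (h.comm i j (by omega) (by omega)).symm
    exact (h1.inv_left.mul_left (ih (by omega))).mul_left h1

lemma IsTypeBChain.commute_pushGen_mul_pushGen (h : IsTypeBChain r b n) {i : ℕ} (hi : i < n) :
    Commute (pushGen r b (i + 1) * pushGen r b i) (r i) := by
  induction i with
  | zero =>
    have h1 := h.quartic hi
    simp only [pushGen]
    rw [Commute, SemiconjBy]
    calc _ = (r 0)⁻¹ * (b * r 0 * b * r 0) := by group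
      _ = _ := by rw [← h1]; group
  | succ i ih =>
    have h1 : Commute (pushGen r b i) (r (i + 1)) := h.commute_pushGen_of_lt (by omega) (by omega)
    have h2 : Commute (pushGen r b (i + 2)) (r i) :=
      h.commute_pushGen_of_succ_lt (by omega) (by omega)
    have h3 := h.braid i hi
    have := (Commute.conj_iff (r (i + 1) * r i)⁻¹).2 (ih (by omega))
    have e1 : (r (i + 1) * r i)⁻¹ * r i * (r (i + 1) * r i) = r (i + 1) := by
      have : r i * (r (i + 1) * r i) = r (i + 1) * r i * r (i + 1) := by rw [← h3, mul_assoc]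
      rw [mul_assoc, this]; group
    have e2 : (r (i + 1) * r i)⁻¹ * pushGen r b i * (r (i + 1) * r i) = pushGen r b (i + 1) := by
      have : pushGen r b i * (r (i + 1) * r i) = r (i + 1) * (pushGen r b i * r i) := by
        rw [← mul_assoc, h1.eq, mul_assoc]
      rw [mul_assoc, this]; simp only [pushGen]; group
    have e3 : (r (i + 1) * r i)⁻¹ * pushGen r b (i + 1) * (r (i + 1) * r i)
        = pushGen r b (i + 2) := by
      have : (r (i + 1) * r i)⁻¹ * pushGen r b (i + 1) * (r (i + 1) * r i)
        = (r i)⁻¹ * (pushGen r b (i + 2) * r i) := by simp only [pushGen]; group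
      rw [this, h2.eq]; group
    have e4 : (r (i + 1) * r i)⁻¹ * (pushGen r b (i + 1) * pushGen r b i) * (r (i + 1) * r i)
        = pushGen r b (i + 2) * pushGen r b (i + 1) := by
      calc _ = ((r (i + 1) * r i)⁻¹ * pushGen r b (i + 1) * (r (i + 1) * r i)) *
            ((r (i + 1) * r i)⁻¹ * pushGen r b i * (r (i + 1) * r i)) := by group
        _ = _ := by rw [e2, e3]
    rw [inv_inv, e1, e4] at this
    exact this

lemma IsTypeBChain.conj_pushGen_mem (h : IsTypeBChain r b n) {i j : ℕ} (hi : i < n) (hj : j ≤ n) :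
    r i * pushGen r b j * (r i)⁻¹ ∈ Subgroup.closure (pushGen r b '' Set.Iic n) ∧
      (r i)⁻¹ * pushGen r b j * r i ∈ Subgroup.closure (pushGen r b '' Set.Iic n) := by
  have mem : ∀ {k}, k ≤ n → pushGen r b k ∈ Subgroup.closure (pushGen r b '' Set.Iic n) :=
    fun hk => Subgroup.subset_closure ⟨_, hk, rfl⟩
  have triv : Commute (pushGen r b j) (r i) →
      r i * pushGen r b j * (r i)⁻¹ ∈ Subgroup.closure (pushGen r b '' Set.Iic n) ∧
      (r i)⁻¹ * pushGen r b j * r i ∈ Subgroup.closure (pushGen r b '' Set.Iic n) := by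
    intro hc
    rw [← hc.eq, mul_inv_cancel_right, mul_assoc, hc.eq, inv_mul_cancel_left]
    exact ⟨mem hj, mem hj⟩
  have hp := (h.commute_pushGen_mul_pushGen hi).eq
  rcases lt_trichotomy j i with hlt | rfl | hgt
  · exact triv (h.commute_pushGen_of_lt hlt hi)
  · refine ⟨?_, mem (k := j + 1) (by omega)⟩
    have : r j * pushGen r b j * (r j)⁻¹
        = (pushGen r b j)⁻¹ * pushGen r b (j + 1) * pushGen r b j := by
      rw [mul_assoc, mul_assoc, eq_inv_mul_iff_mul_eq, ← mul_assoc, ← mul_assoc,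
        mul_inv_eq_iff_eq_mul, hp]
      simp only [pushGen]; group
    rw [this]
    exact mul_mem (mul_mem (inv_mem (mem hj)) (mem (by omega))) (mem hj)
  · obtain rfl | hlt := (Nat.succ_le_of_lt hgt).eq_or_lt
    · constructor
      · have : r i * pushGen r b (i + 1) * (r i)⁻¹ = pushGen r b i := by
          simp only [pushGen]; group
        rw [Nat.succ_eq_add_one, this]
        exact mem (by omega)
      · have : (r i)⁻¹ * pushGen r b (i + 1) * r i
            = pushGen r b (i + 1) * pushGen r b i * (pushGen r b (i + 1))⁻¹ := by
          rw [eq_mul_inv_iff_mul_eq, mul_assoc, mul_assoc, inv_mul_eq_iff_eq_mul, ← hp]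
          simp only [pushGen]; group
        rw [Nat.succ_eq_add_one, this]
        exact mul_mem (mul_mem (mem hj) (mem (by omega))) (inv_mem (mem hj))
    · exact triv (h.commute_pushGen_of_succ_lt hlt hj)

/-- A group generated by a chain of type `B` is the product of the subgroup generated by the
elements `pushGen r b j` and of the subgroup generated by the `r i`. -/
lemma IsTypeBChain.exists_eq_mul (h : IsTypeBChain r b n) {g : G}
    (hg : g ∈ Subgroup.closure (insert b (r '' Set.Iio n))) :
    ∃ u ∈ Subgroup.closure (pushGen r b '' Set.Iic n),
      ∃ v ∈ Subgroup.closure (r '' Set.Iio n), g = u * v := by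
  set A := Subgroup.closure (pushGen r b '' Set.Iic n) with hA
  have conj : ∀ i < n, A ≤ A.comap (MulAut.conj (r i)).toMonoidHom := by
    intro i hi
    rw [hA, Subgroup.closure_le]
    rintro _ ⟨j, hj, rfl⟩
    exact (h.conj_pushGen_mem hi hj).1
  have conj' : ∀ i < n, A ≤ A.comap (MulAut.conj (r i)⁻¹).toMonoidHom := by
    intro i hi
    rw [hA, Subgroup.closure_le]
    rintro _ ⟨j, hj, rfl⟩
    simpa using (h.conj_pushGen_mem hi hj).2
  have hb : b ∈ A := Subgroup.subset_closure ⟨0, Nat.zero_le _, rfl⟩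
  induction hg using Subgroup.closure_induction_left with
  | one => exact ⟨1, one_mem _, 1, one_mem _, by simp⟩
  | mul_left x hx y hy ih =>
    obtain ⟨u, hu, v, hv, rfl⟩ := ih
    rcases hx with rfl | ⟨i, hi, rfl⟩
    · exact ⟨x * u, mul_mem hb hu, v, hv, by group⟩
    · exact ⟨r i * u * (r i)⁻¹, conj i hi hu, r i * v,
        mul_mem (Subgroup.subset_closure ⟨i, hi, rfl⟩) hv, by group⟩
  | inv_mul_cancel x hx y hy ih =>
    obtain ⟨u, hu, v, hv, rfl⟩ := ih
    rcases hx with rfl | ⟨i, hi, rfl⟩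
    · exact ⟨x⁻¹ * u, mul_mem (inv_mem hb) hu, v, hv, by group⟩
    · refine ⟨(r i)⁻¹ * u * r i, ?_, (r i)⁻¹ * v,
        mul_mem (inv_mem (Subgroup.subset_closure ⟨i, hi, rfl⟩)) hv, by group⟩
      simpa using conj' i hi hu

lemma map_eq_of_mem_closure {X : Type*} [Group X] (ρ : G →* MulAut X) {S : Set G} {c : X}
    (hS : ∀ s ∈ S, ρ s c = c) {g : G} (hg : g ∈ Subgroup.closure S) : ρ g c = c := by
  induction hg using Subgroup.closure_induction with
  | mem y hy => exact hS y hy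
  | one => simp
  | mul y z _ _ hy hz => rw [map_mul, MulAut.mul_apply, hz, hy]
  | inv y _ hy => rw [map_inv, MulAut.inv_apply, MulEquiv.symm_apply_eq, hy]

/-- Let a type `B` chain act on a group `X` such that the `r i` fix `c`, and `b` moves `c` inside
its `φ`-twisted conjugacy class. If `κ` detects the twisting elements, then every stabilizer
of `c` in the group generated by the chain lies in the subgroup generated by the `r i`. -/
theorem IsTypeBChain.mem_closure_of_map_eq {X : Type*} [Group X] (h : IsTypeBChain r b n)
    (ρ : G →* MulAut X) (φ κ : X →* X) {c p : X} {x : ℕ → X}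
    (hφ : ∀ g f, ρ g (φ f) = φ (ρ g f))
    (hκr : ∀ i < n, ∀ f, κ (ρ (r i) f) = ρ (r i) (κ f))
    (hκb : ∀ f, κ (ρ b f) = κ f)
    (hrc : ∀ i < n, ρ (r i) c = c)
    (hbc : ρ b c = p⁻¹ * c * φ p) (hp : κ p = x 0)
    (hx : ∀ i < n, ρ (r i) (x (i + 1)) = x i)
    (hfree : Function.Injective (FreeGroup.lift fun j : Fin (n + 1) => x j))
    (hstab : ∀ f, f⁻¹ * c * φ f = c → κ f = 1) {g : G}
    (hg : g ∈ Subgroup.closure (insert b (r '' Set.Iio n))) (hgc : ρ g c = c) :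
    g ∈ Subgroup.closure (r '' Set.Iio n) := by
  have gen : ∀ j ≤ n, (∀ f, κ (ρ (pushGen r b j) f) = κ f) ∧
      ∃ p, ρ (pushGen r b j) c = p⁻¹ * c * φ p ∧ κ p = x j := by
    intro j hj
    induction j with
    | zero => exact ⟨hκb, p, hbc, hp⟩
    | succ j ih =>
      obtain ⟨h1, p, h2, h3⟩ := ih (by omega)
      have hj' : j < n := hj
      have hinv : ∀ f, κ (ρ (r j)⁻¹ f) = ρ (r j)⁻¹ (κ f) := by
        intro f
        have := hκr j hj' (ρ (r j)⁻¹ f)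
        rw [← MulAut.mul_apply, ← map_mul, mul_inv_cancel, map_one, MulAut.one_apply] at this
        rw [this, ← MulAut.mul_apply, ← map_mul, inv_mul_cancel, map_one, MulAut.one_apply]
      have hxj : ρ (r j)⁻¹ (x j) = x (j + 1) := by
        rw [← hx j hj', ← MulAut.mul_apply, ← map_mul, inv_mul_cancel, map_one, MulAut.one_apply]
      have hcj : ρ (r j)⁻¹ c = c := by
        conv_lhs => rw [← hrc j hj']
        rw [← MulAut.mul_apply, ← map_mul, inv_mul_cancel, map_one, MulAut.one_apply]
      refine ⟨fun f => ?_, ρ (r j)⁻¹ p, ?_, ?_⟩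
      · rw [pushGen, map_mul, map_mul, MulAut.mul_apply, MulAut.mul_apply, hinv, h1, ← hinv,
          ← MulAut.mul_apply, ← map_mul, inv_mul_cancel, map_one, MulAut.one_apply]
      · rw [pushGen, map_mul, map_mul, MulAut.mul_apply, MulAut.mul_apply, hrc j hj', h2,
          map_mul, map_mul, hcj, hφ, map_inv]
      · rw [hinv, h3, hxj]
  have word : ∀ w : FreeGroup (Fin (n + 1)),
      (∀ f, κ (ρ (FreeGroup.lift (fun j : Fin (n + 1) => pushGen r b j) w) f) = κ f) ∧
      ∃ p, ρ (FreeGroup.lift (fun j : Fin (n + 1) => pushGen r b j) w) c = p⁻¹ * c * φ p ∧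
        κ p = FreeGroup.lift (fun j : Fin (n + 1) => x j) w := by
    intro w
    induction w using FreeGroup.induction_on with
    | C1 => exact ⟨by simp, 1, by simp, by simp⟩
    | of j => simpa using gen j (Nat.lt_succ_iff.1 j.2)
    | inv_of j ih =>
      obtain ⟨h1, p, h2, h3⟩ := ih
      rw [map_inv]
      generalize FreeGroup.lift (fun j : Fin (n + 1) => pushGen r b j) (FreeGroup.of j) = y at *
      have h1' : ∀ f, κ (ρ y⁻¹ f) = κ f := by
        intro f
        rw [← h1, ← MulAut.mul_apply, ← map_mul, mul_inv_cancel, map_one, MulAut.one_apply]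
      refine ⟨h1', (ρ y⁻¹ p)⁻¹, ?_, by rw [map_inv, h1', h3, map_inv]⟩
      have := congrArg (ρ y⁻¹) h2
      rw [← MulAut.mul_apply, ← map_mul, inv_mul_cancel, map_one, MulAut.one_apply, map_mul,
        map_mul, map_inv, hφ] at this
      rw [inv_inv, map_inv φ, eq_mul_inv_iff_mul_eq, ← inv_mul_eq_iff_eq_mul, ← mul_assoc]
      exact this.symm
    | mul u v hu hv =>
      obtain ⟨h1, p, h2, h3⟩ := hu
      obtain ⟨h1', p', h2', h3'⟩ := hv
      rw [map_mul, map_mul (FreeGroup.lift fun j : Fin (n + 1) => x j)]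
      generalize FreeGroup.lift (fun j : Fin (n + 1) => pushGen r b j) u = y at *
      generalize FreeGroup.lift (fun j : Fin (n + 1) => pushGen r b j) v = z at *
      refine ⟨fun f => by rw [map_mul, MulAut.mul_apply, h1, h1'], p * ρ y p', ?_, ?_⟩
      · rw [map_mul, MulAut.mul_apply, h2', map_mul, map_mul, h2, map_inv, hφ, map_mul φ]
        group
      · rw [map_mul, h1, h3, h3']
  obtain ⟨u, hu, v, hv, rfl⟩ := h.exists_eq_mul hg
  have hvc : ρ v c = c := map_eq_of_mem_closure ρ (by rintro _ ⟨i, hi, rfl⟩; exact hrc i hi) hv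
  have hu' : u ∈ (FreeGroup.lift (fun j : Fin (n + 1) => pushGen r b j)).range := by
    rw [FreeGroup.range_lift_eq_closure]
    convert hu
    ext y
    constructor
    · rintro ⟨j, rfl⟩; exact ⟨j, Nat.lt_succ_iff.1 j.2, rfl⟩
    · rintro ⟨j, hj, rfl⟩; exact ⟨⟨j, Nat.lt_succ_iff.2 hj⟩, rfl⟩
  obtain ⟨w, rfl⟩ := hu'
  obtain ⟨-, p, h2, h3⟩ := word w
  rw [map_mul, MulAut.mul_apply, hvc, h2] at hgc
  rw [hstab p hgc] at h3
  have : w = 1 := hfree (by rw [← h3, map_one])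
  rw [this, map_one, one_mul]
  exact hv

end TypeB

section Cosets

variable {G : Type*} [Group G] {q : ℕ → G} {n : ℕ}

/-- The product `q 0 * q 1 * ⋯ * q (d - 1)`. -/
def chainProd (q : ℕ → G) (d : ℕ) : G := ((List.range d).map q).prod

@[simp] lemma chainProd_zero (q : ℕ → G) : chainProd q 0 = 1 := rfl

lemma chainProd_succ (q : ℕ → G) (d : ℕ) : chainProd q (d + 1) = chainProd q d * q d := by
  simp [chainProd, List.range_succ]

lemma IsBraidChain.mono {k : ℕ} (h : IsBraidChain q n) (hk : k ≤ n) : IsBraidChain q k :=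
  ⟨fun i hi => h.braid i (by omega), fun i j hij hj => h.comm i j hij (by omega)⟩

lemma IsBraidChain.reverse (h : IsBraidChain q (n + 1)) :
    IsBraidChain (fun d => q (n - d)) (n + 1) where
  braid i hi := by
    have := h.braid (n - (i + 1)) (by omega)
    rw [show n - (i + 1) + 1 = n - i by omega] at this
    exact this.symm
  comm i j hij hj := (h.comm (n - j) (n - i) (by omega) (by omega)).symm

lemma IsBraidChain.commute_chainProd (h : IsBraidChain q n) {d i : ℕ} (hd : d < i) (hi : i < n) :
    Commute (chainProd q d) (q i) := by
  induction d with
  | zero => simp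
  | succ d ih =>
    rw [chainProd_succ]
    exact (ih (by omega)).mul_left (h.comm d i hd hi)

lemma IsBraidChain.chainProd_mul (h : IsBraidChain q n) {d i : ℕ} (hi : i + 1 < d) (hd : d ≤ n) :
    chainProd q d * q i = q (i + 1) * chainProd q d := by
  induction d, hi using Nat.le_induction with
  | base =>
    have h1 := (h.commute_chainProd (d := i) (i := i + 1) (by omega) (by omega)).eq
    have h2 := h.braid i (by omega)
    rw [chainProd_succ, chainProd_succ, mul_assoc, mul_assoc, ← mul_assoc (q i), h2, ← mul_assoc,
      ← mul_assoc, h1]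
    group
  | succ d hd' ih =>
    rw [chainProd_succ, mul_assoc, ← (h.comm i d (by omega) (by omega)).eq, ← mul_assoc,
      ih (by omega), mul_assoc]

lemma IsBraidChain.isTypeBChain_tail (h : IsBraidChain q (n + 1)) :
    IsTypeBChain (fun i => q (i + 1)) (q 0 * q 0) n where
  braid i hi := h.braid (i + 1) (by omega)
  comm i j hij hj := h.comm (i + 1) (j + 1) (by omega) (by omega)
  quartic hn := by
    have h1 := h.braid 0 (by omega)
    simp only [zero_add] at h1 ⊢
    generalize q 0 = s at *
    generalize q 1 = t at *
    have h2 : t * (s * s) * t * (s * s) = (t * s * t) * (s * t * s) := by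
      calc _ = t * s * (s * t * s) * s := by group
        _ = t * s * (t * s * t) * s := by rw [h1]
        _ = _ := by group
    have h3 : s * s * t * (s * s) * t = (s * t * s) * (t * s * t) := by
      calc _ = s * (s * t * s) * s * t := by group
        _ = s * (t * s * t) * s * t := by rw [h1]
        _ = _ := by group
    rw [h2, h3, h1]
  comm_end i hi hin := by
    have := h.comm 0 (i + 1) (by omega) (by omega)
    exact this.mul_left this

/-- The cosets of the subgroup generated by `q 0 ^ 2, q 1, …, q n` in the group generated by
`q 0, …, q n` are represented by the products `q 0 * ⋯ * q (d - 1)`. -/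
lemma IsBraidChain.exists_eq_mul_chainProd (h : IsBraidChain q (n + 1)) {g : G}
    (hg : g ∈ Subgroup.closure (q '' Set.Iio (n + 1))) :
    ∃ d ≤ n + 1, ∃ a ∈ Subgroup.closure (insert (q 0 * q 0) ((fun i => q (i + 1)) '' Set.Iio n)),
      g = a * chainProd q d := by
  set D := Subgroup.closure (insert (q 0 * q 0) ((fun i => q (i + 1)) '' Set.Iio n)) with hD
  have mem : ∀ i, i < n → q (i + 1) ∈ D := fun i hi =>
    Subgroup.subset_closure (Or.inr ⟨i, hi, rfl⟩)
  have sq : ∀ e ≤ n, chainProd q e * (q e * q e) * (chainProd q e)⁻¹ ∈ D := by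
    intro e he
    induction e with
    | zero => simpa using Subgroup.subset_closure (Set.mem_insert _ _)
    | succ e ih =>
      have h1 := (h.commute_chainProd (d := e) (i := e + 1) (by omega) (by omega)).eq
      have h2 := h.braid e (by omega)
      have h3 : q e * (q (e + 1) * q (e + 1)) * (q e)⁻¹
          = (q (e + 1))⁻¹ * (q e * q e) * q (e + 1) := by
        rw [mul_inv_eq_iff_eq_mul, mul_assoc, mul_assoc, eq_inv_mul_iff_mul_eq]
        calc _ = (q (e + 1) * q e * q (e + 1)) * q (e + 1) := by group
          _ = (q e * q (e + 1) * q e) * q (e + 1) := by rw [h2]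
          _ = q e * (q (e + 1) * q e * q (e + 1)) := by group
          _ = q e * (q e * q (e + 1) * q e) := by rw [h2]
          _ = _ := by group
      have h4 : chainProd q (e + 1) * (q (e + 1) * q (e + 1)) * (chainProd q (e + 1))⁻¹
          = (q (e + 1))⁻¹ * (chainProd q e * (q e * q e) * (chainProd q e)⁻¹) * q (e + 1) := by
        calc _ = chainProd q e * (q e * (q (e + 1) * q (e + 1)) * (q e)⁻¹) * (chainProd q e)⁻¹ := by
              rw [chainProd_succ]; group
          _ = (chainProd q e * (q (e + 1))⁻¹) * (q e * q e) *
              (chainProd q e * (q (e + 1))⁻¹)⁻¹ := by rw [h3]; group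
          _ = _ := by
            rw [((show Commute _ _ from h1).inv_right).eq]; group
      rw [h4]
      exact mul_mem (mul_mem (inv_mem (mem e (by omega))) (ih (by omega))) (mem e (by omega))
  induction hg using Subgroup.closure_induction_right with
  | one => exact ⟨0, by omega, 1, one_mem _, by simp⟩
  | mul_right x hx y hy ih =>
    obtain ⟨d, hd, a, ha, rfl⟩ := ih
    obtain ⟨i, hi, rfl⟩ := hy
    replace hi : i < n + 1 := hi
    rcases lt_trichotomy d i with hlt | rfl | hgt
    · refine ⟨d, hd, a * q i, ?_, ?_⟩
      · obtain ⟨i, rfl⟩ := Nat.exists_eq_add_one_of_ne_zero (by omega : i ≠ 0)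
        exact mul_mem ha (mem i (by omega))
      · rw [mul_assoc, (h.commute_chainProd hlt hi).eq, mul_assoc]
    · exact ⟨d + 1, by omega, a, ha, by rw [chainProd_succ, mul_assoc]⟩
    · obtain rfl | hlt := (Nat.succ_le_of_lt hgt).eq_or_lt
      · refine ⟨i, by omega, _, mul_mem ha (sq i (by omega)), ?_⟩
        rw [Nat.succ_eq_add_one, chainProd_succ]; group
      · refine ⟨d, hd, a * q (i + 1), mul_mem ha (mem i (by omega)), ?_⟩
        rw [mul_assoc, h.chainProd_mul hlt (by omega), mul_assoc]
  | mul_inv_cancel x hx y hy ih =>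
    obtain ⟨d, hd, a, ha, rfl⟩ := ih
    obtain ⟨i, hi, rfl⟩ := hy
    replace hi : i < n + 1 := hi
    rcases lt_trichotomy d i with hlt | rfl | hgt
    · refine ⟨d, hd, a * (q i)⁻¹, ?_, ?_⟩
      · obtain ⟨i, rfl⟩ := Nat.exists_eq_add_one_of_ne_zero (by omega : i ≠ 0)
        exact mul_mem ha (inv_mem (mem i (by omega)))
      · rw [mul_assoc, (h.commute_chainProd hlt hi).inv_right.eq, mul_assoc]
    · refine ⟨d + 1, by omega, _, mul_mem ha (inv_mem (sq d (by omega))), ?_⟩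
      rw [chainProd_succ]; group
    · obtain rfl | hlt := (Nat.succ_le_of_lt hgt).eq_or_lt
      · refine ⟨i, by omega, a, ha, ?_⟩
        rw [Nat.succ_eq_add_one, chainProd_succ]; group
      · refine ⟨d, hd, a * (q (i + 1))⁻¹, mul_mem ha (inv_mem (mem i (by omega))), ?_⟩
        rw [mul_assoc, mul_assoc, mul_right_inj, eq_inv_mul_iff_mul_eq, ← mul_assoc,
          mul_inv_eq_iff_eq_mul, h.chainProd_mul hlt (by omega)]

end Cosets

section HalfTwists

open FreeGroup (of lift)

/-- A set of integers without two consecutive elements. -/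
def IsSparse (T : Set ℤ) : Prop := ∀ j ∈ T, j + 1 ∉ T

open scoped Classical in
/-- The automorphism of the free group on `x_j`, `j ∈ ℤ`, given by the simultaneous half twists
`x_j ↦ x_{j+1}`, `x_{j+1} ↦ x_{j+1}⁻¹ x_j x_{j+1}` for `j ∈ T`. -/
noncomputable def halfTwists (T : Set ℤ) (hT : IsSparse T) : MulAut (FreeGroup ℤ) :=
  MonoidHom.toMulEquiv
    (lift fun j => if j ∈ T then of (j + 1)
      else if j - 1 ∈ T then (of j)⁻¹ * of (j - 1) * of j else of j)
    (lift fun j => if j ∈ T then of j * of (j + 1) * (of j)⁻¹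
      else if j - 1 ∈ T then of (j - 1) else of j)
    (by
      ext j
      by_cases h1 : j ∈ T
      · simp [h1, hT j h1]
      · by_cases h2 : j - 1 ∈ T
        · simp [h1, h2, mul_assoc]
        · simp [h1, h2])
    (by
      ext j
      by_cases h1 : j ∈ T
      · simp [h1, hT j h1]
        group
      · by_cases h2 : j - 1 ∈ T
        · simp [h1, h2, mul_assoc]
        · simp [h1, h2])

variable {T T' : Set ℤ} {hT : IsSparse T} {j : ℤ}

lemma halfTwists_of_mem (hj : j ∈ T) : halfTwists T hT (of j) = of (j + 1) := by
  simp [halfTwists, hj]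

lemma halfTwists_of_sub_one_mem (hj : j - 1 ∈ T) :
    halfTwists T hT (of j) = (of j)⁻¹ * of (j - 1) * of j := by
  have : j ∉ T := by simpa using hT _ hj
  simp [halfTwists, hj, this]

lemma halfTwists_of_notMem (hj : j ∉ T) (hj' : j - 1 ∉ T) : halfTwists T hT (of j) = of j := by
  simp [halfTwists, hj, hj']

lemma mulAut_freeGroup_ext {α : Type*} {f g : MulAut (FreeGroup α)} (h : ∀ a, f (of a) = g (of a)) :
    f = g := by
  ext x
  exact DFunLike.congr_fun (FreeGroup.ext_hom _ _ h : f.toMonoidHom = g.toMonoidHom) x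

lemma halfTwists_mul (hT' : IsSparse T') (hU : IsSparse (T ∪ T')) (hd : Disjoint T T') :
    halfTwists T hT * halfTwists T' hT' = halfTwists (T ∪ T') hU := by
  apply mulAut_freeGroup_ext
  intro j
  have hd' : ∀ i ∈ T, i ∉ T' := fun i h => Set.disjoint_left.1 hd h
  have u1 : j - 1 ∈ T ∪ T' → j ∉ T ∪ T' := fun h => by simpa using hU _ h
  have u2 : j ∈ T ∪ T' → j + 1 ∉ T ∪ T' := hU j
  have u3 : j - 1 - 1 ∈ T ∪ T' → j - 1 ∉ T ∪ T' := fun h => by simpa using hU _ h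
  simp only [Set.mem_union, not_or] at u1 u2 u3
  rw [MulAut.mul_apply]
  by_cases h1 : j ∈ T'
  · have := u2 (.inr h1)
    have h2 : j ∉ T := fun h => hd' j h h1
    rw [halfTwists_of_mem h1, halfTwists_of_mem (T := T ∪ T') (.inr h1),
      halfTwists_of_notMem this.1 (by simpa using h2)]
  by_cases h2 : j - 1 ∈ T'
  · have := u1 (.inr h2)
    have h3 : j - 1 ∉ T := fun h => hd' _ h h2
    rw [halfTwists_of_sub_one_mem h2, halfTwists_of_sub_one_mem (T := T ∪ T') (.inr h2), map_mul, map_mul,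
      map_inv, halfTwists_of_notMem this.1 h3, halfTwists_of_notMem h3 (fun h => (u3 (.inl h)).2 h2)]
  rw [halfTwists_of_notMem h1 h2]
  by_cases h3 : j ∈ T
  · rw [halfTwists_of_mem h3, halfTwists_of_mem (T := T ∪ T') (.inl h3)]
  by_cases h4 : j - 1 ∈ T
  · rw [halfTwists_of_sub_one_mem h4, halfTwists_of_sub_one_mem (T := T ∪ T') (.inl h4)]
  rw [halfTwists_of_notMem h3 h4, halfTwists_of_notMem (by simp [h1, h3]) (by simp [h2, h4])]

lemma halfTwists_congr {hT' : IsSparse T'} (h : T = T') : halfTwists T hT = halfTwists T' hT' := by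
  subst h; rfl

lemma halfTwists_commute (hT' : IsSparse T') (hU : IsSparse (T ∪ T')) (hd : Disjoint T T') :
    Commute (halfTwists T hT) (halfTwists T' hT') := by
  rw [Commute, SemiconjBy, halfTwists_mul hT' hU hd,
    halfTwists_mul hT (by rwa [Set.union_comm]) hd.symm]
  exact halfTwists_congr (Set.union_comm _ _)

lemma halfTwists_braid (hT' : IsSparse T') (h1 : ∀ j, j + 1 ∈ T' ↔ j ∈ T)
    (h2 : ∀ j ∈ T, j + 2 ∉ T) :
    halfTwists T hT * halfTwists T' hT' * halfTwists T hT =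
      halfTwists T' hT' * halfTwists T hT * halfTwists T' hT' := by
  have h1' : ∀ j, j ∈ T' ↔ j - 1 ∈ T := fun j => by rw [← h1]; simp
  have hT0 : ∀ j ∈ T, j + 1 ∉ T := hT
  apply mulAut_freeGroup_ext
  intro j
  simp only [MulAut.mul_apply]
  have key : ∀ j ∈ T,
      halfTwists T hT (of j) = of (j + 1) ∧ halfTwists T' hT' (of j) = of j ∧
      halfTwists T hT (of (j + 1)) = (of (j + 1))⁻¹ * of j * of (j + 1) ∧
      halfTwists T' hT' (of (j + 1)) = of (j + 2) ∧
      halfTwists T hT (of (j + 2)) = of (j + 2) ∧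
      halfTwists T' hT' (of (j + 2)) = (of (j + 2))⁻¹ * of (j + 1) * of (j + 2) := by
    intro j hj
    refine ⟨halfTwists_of_mem hj, halfTwists_of_notMem ?_ ?_, ?_, ?_, ?_, ?_⟩
    · intro h
      have := hT0 _ ((h1' j).1 h)
      simp [hj] at this
    · intro h
      have := h2 _ ((h1' _).1 h)
      exact this (by convert hj using 1; ring)
    · simpa using halfTwists_of_sub_one_mem (hT := hT) (j := j + 1) (by simpa using hj)
    · rw [halfTwists_of_mem ((h1 j).2 hj)]; congr 1; ring
    · exact halfTwists_of_notMem (h2 j hj) (by convert hT0 j hj using 2; ring)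
    · have e : j + 2 - 1 = j + 1 := by ring
      rw [halfTwists_of_sub_one_mem (j := j + 2) (by rw [e]; exact (h1 j).2 hj), e]
  by_cases a : j ∈ T
  · obtain ⟨k1, k2, k3, k4, k5, k6⟩ := key j a
    simp [k1, k2, k4, k5]
  by_cases b : j - 1 ∈ T
  · obtain ⟨k1, k2, k3, k4, k5, k6⟩ := key _ b
    obtain ⟨j, rfl⟩ : ∃ i, j = i + 1 := ⟨j - 1, by ring⟩
    simp only [add_sub_cancel_right] at *
    simp [k1, k2, k3, k4, k5, k6]
  by_cases c : j - 2 ∈ T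
  · obtain ⟨k1, k2, k3, k4, k5, k6⟩ := key _ c
    obtain ⟨j, rfl⟩ : ∃ i, j = i + 2 := ⟨j - 2, by ring⟩
    simp only [add_sub_cancel_right] at *
    simp [k2, k3, k4, k5, k6, mul_assoc]
  have e1 : halfTwists T hT (of j) = of j := halfTwists_of_notMem a b
  have e2 : halfTwists T' hT' (of j) = of j := by
    refine halfTwists_of_notMem (by rwa [h1']) ?_
    rw [h1']
    convert c using 2
    ring
  simp [e1, e2]

end HalfTwists

section Stabilizer

open FreeGroup (of lift)

/-- Left translation of the first coordinate of `F × Bool`. -/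
def leftTranslation {F : Type*} [Group F] (f : F) : Equiv.Perm (F × Bool) :=
  (Equiv.mulLeft f).prodCongr (Equiv.refl _)

@[simp] lemma leftTranslation_apply {F : Type*} [Group F] (f : F) (z : F × Bool) :
    leftTranslation f z = (f * z.1, z.2) := rfl

lemma leftTranslation_mul {F : Type*} [Group F] (f g : F) :
    leftTranslation (f * g) = leftTranslation f * leftTranslation g := by
  ext1 z
  simp [mul_assoc]

/-- The permutation of `F × Bool` exchanging the two points above `1`. -/
def flipOne (F : Type*) [Group F] [DecidableEq F] : Equiv.Perm (F × Bool) :=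
  Equiv.swap (1, true) (1, false)

variable {F : Type*} [Group F]

lemma flipOne_apply_fst [DecidableEq F] (z : F × Bool) : (flipOne F z).1 = z.1 := by
  rw [flipOne, Equiv.swap_apply_def]
  split_ifs with h1 h2
  · rw [h1]
  · rw [h2]
  · rfl

lemma fst_apply_of_forall_of {α : Type*} {Θ : FreeGroup α →* Equiv.Perm (F × Bool)}
    {κ : FreeGroup α →* F} (h : ∀ a z, (Θ (of a) z).1 = κ (of a) * z.1) (p : FreeGroup α)
    (z : F × Bool) : (Θ p z).1 = κ p * z.1 := by
  induction p using FreeGroup.induction_on generalizing z with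
  | C1 => simp
  | of a => exact h a z
  | inv_of a ih =>
    have := ih (Θ (of a)⁻¹ z)
    rw [← Equiv.Perm.mul_apply, ← map_mul, mul_inv_cancel, map_one, Equiv.Perm.one_apply] at this
    rw [this, map_inv κ, inv_mul_cancel_left]
  | mul x y hx hy => rw [map_mul, Equiv.Perm.mul_apply, hx, hy, map_mul, mul_assoc]

lemma eq_one_of_commute_flipOne [DecidableEq F] {α : Type*} {Θ : FreeGroup α →* Equiv.Perm (F × Bool)}
    {κ : FreeGroup α →* F} (h : ∀ a z, (Θ (of a) z).1 = κ (of a) * z.1) {p : FreeGroup α}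
    (hp : Commute (Θ p) (flipOne F)) : κ p = 1 := by
  have h1 := fst_apply_of_forall_of h p (1, true)
  have h2 := DFunLike.congr_fun hp.eq (1, true)
  rw [Equiv.Perm.mul_apply, Equiv.Perm.mul_apply] at h2
  by_contra hne
  have h3 : flipOne F (Θ p (1, true)) = Θ p (1, true) := by
    apply Equiv.swap_apply_of_ne_of_ne <;>
    · intro h
      rw [h] at h1
      simp only [mul_one] at h1
      exact hne h1.symm
  rw [h3] at h2
  have := (Θ p).injective h2
  simp [flipOne] at this

end Stabilizer

section Artin

open FreeGroup (of lift)

/-- The endomorphism killing all `x_j` except `x_0, …, x_n`. -/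
def truncate (n : ℕ) : FreeGroup ℤ →* FreeGroup ℤ :=
  lift fun j => if 0 ≤ j ∧ j ≤ n then of j else 1

lemma truncate_of_mem {n : ℕ} {j : ℤ} (h : 0 ≤ j) (h' : j ≤ n) : truncate n (of j) = of j := by
  simp [truncate, h, h']

lemma truncate_of_notMem {n : ℕ} {j : ℤ} (h : j < 0 ∨ n < j) : truncate n (of j) = 1 := by
  simp only [truncate, FreeGroup.lift_apply_of]
  rw [if_neg (by omega)]

lemma truncate_eq_one_of_conj {n : ℕ} {f : FreeGroup ℤ}
    (hf : f⁻¹ * of ((n : ℤ) + 1) * f = of ((n : ℤ) + 1)) : truncate n f = 1 := by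
  let Θ : FreeGroup ℤ →* Equiv.Perm (FreeGroup ℤ × Bool) := lift fun j =>
    if j = (n : ℤ) + 1 then flipOne _ else leftTranslation (truncate n (of j))
  have hΘ : Θ (of ((n : ℤ) + 1)) = flipOne _ := by simp [Θ]
  refine eq_one_of_commute_flipOne (Θ := Θ) ?_ ?_
  · intro j z
    by_cases hj : j = (n : ℤ) + 1
    · rw [hj, hΘ, flipOne_apply_fst, truncate_of_notMem (by omega), one_mul]
    · simp [Θ, hj]
  · rw [mul_assoc, inv_mul_eq_iff_eq_mul] at hf
    rw [Commute, SemiconjBy, ← hΘ, ← map_mul, ← map_mul, hf]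

lemma isConj_map_of_mem_closure {G : Type*} [Group G] (ρ : G →* MulAut (FreeGroup ℤ)) {S : Set G} {c : FreeGroup ℤ}
    (hS : ∀ y ∈ S, IsConj c (ρ y c)) {g : G} (hg : g ∈ Subgroup.closure S) : IsConj c (ρ g c) := by
  induction hg using Subgroup.closure_induction with
  | mem y hy => exact hS y hy
  | one => simpa using IsConj.refl c
  | mul y z _ _ hy hz =>
    rw [map_mul, MulAut.mul_apply]
    exact hy.trans ((ρ y).toMonoidHom.map_isConj hz)
  | inv y _ hy =>
    have := (ρ y⁻¹).toMonoidHom.map_isConj hy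
    change IsConj (ρ y⁻¹ c) (ρ y⁻¹ (ρ y c)) at this
    rw [← MulAut.mul_apply, ← map_mul, inv_mul_cancel, map_one, MulAut.one_apply] at this
    exact this.symm

lemma eq_of_isConj_of {α : Type*} [DecidableEq α] {a b : α} (h : IsConj (of a) (of b)) : a = b := by
  let ε : FreeGroup α →* Multiplicative ℤ :=
    lift fun c => if c = a then Multiplicative.ofAdd 1 else 1
  have := isConj_iff_eq.1 (ε.map_isConj h)
  by_contra hne
  simp [ε, Ne.symm hne] at this

lemma lift_of_sub_injective (a : ℤ) (n : ℕ) :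
    Function.Injective (lift fun j : Fin n => of (a - (j : ℕ))) := by
  have : (lift fun j : Fin n => of (a - (j : ℕ))) = FreeGroup.map fun j : Fin n => a - (j : ℕ) := by
    ext; simp
  rw [this]
  apply FreeGroup.map_injective
  intro i j hij
  ext
  simpa using hij

/-- The elements `s i`, `i < N`, satisfy the braid relations and act on the free group on
`x_j`, `j ∈ ℤ`, by half twists, acting on `x_0, …, x_N` as the Artin generators. -/
structure IsArtinChain {G : Type*} [Group G] (ρ : G →* MulAut (FreeGroup ℤ)) (s : ℕ → G)
    (N : ℕ) : Prop extends IsBraidChain s N where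
  eq_halfTwists : ∀ i < N, ∃ (T : Set ℤ) (hT : IsSparse T), ρ (s i) = halfTwists T hT ∧
    (i : ℤ) ∈ T ∧ ∀ j ∈ T, j = i ∨ j + 1 < 0 ∨ (N : ℤ) < j

namespace IsArtinChain

variable {G : Type*} [Group G] {ρ : G →* MulAut (FreeGroup ℤ)} {s : ℕ → G} {N : ℕ}

lemma map_of_self (h : IsArtinChain ρ s N) {i : ℕ} (hi : i < N) :
    ρ (s i) (of (i : ℤ)) = of ((i : ℤ) + 1) := by
  obtain ⟨T, hT, h1, h2, h3⟩ := h.eq_halfTwists i hi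
  rw [h1, halfTwists_of_mem h2]

lemma map_of_succ (h : IsArtinChain ρ s N) {i : ℕ} (hi : i < N) :
    ρ (s i) (of ((i : ℤ) + 1)) = (of ((i : ℤ) + 1))⁻¹ * of (i : ℤ) * of ((i : ℤ) + 1) := by
  obtain ⟨T, hT, h1, h2, h3⟩ := h.eq_halfTwists i hi
  rw [h1, halfTwists_of_sub_one_mem (by simpa using h2), add_sub_cancel_right]

lemma map_of_ne (h : IsArtinChain ρ s N) {i : ℕ} (hi : i < N) {j : ℤ} (hj : 0 ≤ j) (hj' : j ≤ N)
    (h1 : j ≠ i) (h2 : j ≠ i + 1) : ρ (s i) (of j) = of j := by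
  obtain ⟨T, hT, h3, h4, h5⟩ := h.eq_halfTwists i hi
  rw [h3]
  apply halfTwists_of_notMem
  · intro h; have := h5 _ h; omega
  · intro h; have := h5 _ h; omega

lemma truncate_map (h : IsArtinChain ρ s N) {i n : ℕ} (hi : i < n) (hn : n ≤ N)
    (f : FreeGroup ℤ) : truncate n (ρ (s i) f) = ρ (s i) (truncate n f) := by
  suffices H : (truncate n).comp (ρ (s i)).toMonoidHom = (ρ (s i)).toMonoidHom.comp (truncate n) from
    DFunLike.congr_fun H f
  ext j
  change truncate n (ρ (s i) (of j)) = ρ (s i) (truncate n (of j))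
  by_cases hj : 0 ≤ j ∧ j ≤ n
  · rw [truncate_of_mem hj.1 hj.2]
    by_cases h1 : j = i
    · rw [h1, h.map_of_self (by omega), truncate_of_mem (by omega) (by omega)]
    by_cases h2 : j = i + 1
    · rw [h2, h.map_of_succ (by omega), map_mul, map_mul, map_inv,
        truncate_of_mem (by omega) (by omega), truncate_of_mem (by omega) (by omega)]
    rw [h.map_of_ne (by omega) hj.1 (by omega) h1 h2, truncate_of_mem hj.1 hj.2]
  · rw [truncate_of_notMem (by omega), map_one]
    obtain ⟨T, hT, h3, h4, h5⟩ := h.eq_halfTwists i (by omega)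
    rw [h3]
    by_cases h1 : j ∈ T
    · have := h5 _ h1
      rw [halfTwists_of_mem h1, truncate_of_notMem (by omega)]
    by_cases h2 : j - 1 ∈ T
    · have := h5 _ h2
      rw [halfTwists_of_sub_one_mem h2, map_mul, map_mul, map_inv,
        truncate_of_notMem (by omega), truncate_of_notMem (by omega)]
      simp
    rw [halfTwists_of_notMem h1 h2, truncate_of_notMem (by omega)]

lemma truncate_map_sq (h : IsArtinChain ρ s N) {n : ℕ} (hn : n < N) (f : FreeGroup ℤ) :
    truncate n (ρ (s n * s n) f) = truncate n f := by
  have e : ∀ f, truncate n (truncate N f) = truncate n f := by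
    intro f
    suffices H : (truncate n).comp (truncate N) = truncate n from DFunLike.congr_fun H f
    ext j
    change truncate n (truncate N (of j)) = truncate n (of j)
    by_cases hj : 0 ≤ j ∧ j ≤ N
    · rw [truncate_of_mem hj.1 hj.2]
    · rw [truncate_of_notMem (n := N) (by omega), truncate_of_notMem (n := n) (by omega), map_one]
  rw [← e, ← e f, map_mul, MulAut.mul_apply, h.truncate_map hn le_rfl, h.truncate_map hn le_rfl]
  suffices H : ((truncate n).comp ((ρ (s n)).toMonoidHom.comp (ρ (s n)).toMonoidHom)).comp
      (truncate N) = (truncate n).comp (truncate N) from DFunLike.congr_fun H f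
  ext j
  change truncate n (ρ (s n) (ρ (s n) (truncate N (of j)))) = truncate n (truncate N (of j))
  by_cases hj : 0 ≤ j ∧ j ≤ N
  · rw [truncate_of_mem hj.1 hj.2]
    have t1 : truncate n (of ((n : ℤ) + 1)) = 1 := truncate_of_notMem (by omega)
    by_cases h1 : j = n
    · rw [h1, h.map_of_self hn, h.map_of_succ hn]
      simp [t1]
    by_cases h2 : j = n + 1
    · rw [h2, h.map_of_succ hn]
      simp [h.map_of_self hn, h.map_of_succ hn, t1]
    rw [h.map_of_ne hn hj.1 hj.2 h1 h2, h.map_of_ne hn hj.1 hj.2 h1 h2]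
  · rw [truncate_of_notMem (n := N) (by omega)]
    simp

/-- Faithfulness of the Artin representation. -/
theorem eq_one_of_map_eq_one (h : IsArtinChain ρ s N) {n : ℕ} (hn : n ≤ N) {g : G}
    (hg : g ∈ Subgroup.closure (s '' Set.Iio n)) (hρ : ρ g = 1) : g = 1 := by
  induction n generalizing g with
  | zero => simpa using hg
  | succ n ih =>
    have hn' : n < N := hn
    let q : ℕ → G := fun d => s (n - d)
    have hq0 : q 0 = s n := rfl
    have hq : IsBraidChain q (n + 1) := (h.toIsBraidChain.mono hn).reverse
    have im : q '' Set.Iio (n + 1) = s '' Set.Iio (n + 1) := by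
      ext y
      constructor
      · rintro ⟨d, hd, rfl⟩
        exact ⟨n - d, by simp only [Set.mem_Iio] at *; omega, rfl⟩
      · rintro ⟨d, hd, rfl⟩
        simp only [Set.mem_Iio] at hd
        refine ⟨n - d, by simp only [Set.mem_Iio] at *; omega, ?_⟩
        change s (n - (n - d)) = s d
        congr 1; omega
    have im' : (fun i => q (i + 1)) '' Set.Iio n = s '' Set.Iio n := by
      ext y
      constructor
      · rintro ⟨d, hd, rfl⟩
        simp only [Set.mem_Iio] at hd
        exact ⟨n - (d + 1), by simp only [Set.mem_Iio] at *; omega, rfl⟩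
      · rintro ⟨d, hd, rfl⟩
        simp only [Set.mem_Iio] at hd
        refine ⟨n - (d + 1), by simp only [Set.mem_Iio] at *; omega, ?_⟩
        change s (n - (n - (d + 1) + 1)) = s d
        congr 1; omega
    have hsq : ρ (q 0 * q 0) (of ((n : ℤ) + 1)) = (of (n : ℤ) * of ((n : ℤ) + 1))⁻¹ *
        of ((n : ℤ) + 1) * (of (n : ℤ) * of ((n : ℤ) + 1)) := by
      rw [hq0, map_mul, MulAut.mul_apply, h.map_of_succ hn']
      simp [h.map_of_self hn', h.map_of_succ hn', mul_assoc]
    have hfix : ∀ i < n, ρ (q (i + 1)) (of ((n : ℤ) + 1)) = of ((n : ℤ) + 1) := by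
      intro i hi
      exact h.map_of_ne (by omega) (by omega) (by omega) (by omega) (by omega)
    rw [← im] at hg
    obtain ⟨d, hd, a, ha, rfl⟩ := hq.exists_eq_mul_chainProd hg
    have hM : ∀ d ≤ n + 1, ρ (chainProd q d) (of ((n : ℤ) + 1 - d)) = of ((n : ℤ) + 1) := by
      intro d hd
      induction d with
      | zero => simp
      | succ d ihd =>
        rw [chainProd_succ, map_mul, MulAut.mul_apply]
        have : ρ (q d) (of ((n : ℤ) + 1 - (d + 1 : ℕ))) = of ((n : ℤ) + 1 - d) := by
          have := h.map_of_self (i := n - d) (by omega)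
          convert this using 3
          · push_cast [show d ≤ n by omega]; ring
          · push_cast [show d ≤ n by omega]; ring
        rw [this, ihd (by omega)]
    have hc : IsConj (of ((n : ℤ) + 1)) (ρ a (of ((n : ℤ) + 1))) := by
      refine isConj_map_of_mem_closure ρ ?_ ha
      rintro y (rfl | ⟨i, hi, rfl⟩)
      · rw [hsq, isConj_iff]
        exact ⟨(of (n : ℤ) * of ((n : ℤ) + 1))⁻¹, by simp⟩
      · change IsConj _ (ρ (q (i + 1)) _)
        rw [hfix i hi]
    have hd0 : d = 0 := by
      rw [← hM d hd, ← MulAut.mul_apply, ← map_mul, hρ, MulAut.one_apply, hM d hd] at hc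
      have := eq_of_isConj_of hc
      omega
    subst hd0
    rw [chainProd_zero, mul_one] at hρ ⊢
    refine ih hn'.le ?_ hρ
    rw [← im']
    refine hq.isTypeBChain_tail.mem_closure_of_map_eq ρ (MonoidHom.id _) (truncate n)
      (c := of ((n : ℤ) + 1)) (p := of (n : ℤ) * of ((n : ℤ) + 1)) (x := fun d => of ((n : ℤ) - d))
      (fun _ _ => rfl) ?_ ?_ hfix hsq ?_ ?_ ?_ ?_ ha ?_
    · intro i hi f
      exact h.truncate_map (by omega) hn'.le f
    · exact h.truncate_map_sq hn'
    · rw [map_mul, truncate_of_mem (by omega) le_rfl, truncate_of_notMem (by omega)]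
      simp
    · intro i hi
      have := h.map_of_self (i := n - (i + 1)) (by omega)
      convert this using 3
      · push_cast [show i + 1 ≤ n by omega]; ring
      · push_cast [show i + 1 ≤ n by omega]; ring
    · exact lift_of_sub_injective _ _
    · exact fun f hf => truncate_eq_one_of_conj hf
    · rw [hρ, MulAut.one_apply]

end IsArtinChain

end Artin

section PeriodicLift

open FreeGroup (of lift)

/-- The homomorphism from the free group on `x_j`, `j ∈ ℤ`, sending `x_{a + mk}` to the conjugate
of `y a` by `c ^ k`, for `0 ≤ a < m`. -/
def periodicLift {H : Type*} [Group H] (m : ℕ) (c : H) (y : ℤ → H) : FreeGroup ℤ →* H :=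
  lift fun j => c ^ (-(j / m)) * y (j % m) * c ^ (j / m)

/-- The endomorphism `x_j ↦ x_{j + m}` of the free group on `x_j`, `j ∈ ℤ`. -/
def shiftHom (m : ℕ) : FreeGroup ℤ →* FreeGroup ℤ := FreeGroup.map (· + (m : ℤ))

@[simp] lemma shiftHom_of (m : ℕ) (j : ℤ) : shiftHom m (of j) = of (j + m) := by simp [shiftHom]

variable {H : Type*} [Group H] {m : ℕ} {c : H} {y : ℤ → H}

lemma periodicLift_of (j : ℤ) :
    periodicLift m c y (of j) = c ^ (-(j / m)) * y (j % m) * c ^ (j / m) := by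
  simp [periodicLift]

lemma periodicLift_of_lt {j : ℤ} (h0 : 0 ≤ j) (h1 : j < m) : periodicLift m c y (of j) = y j := by
  rw [periodicLift_of, Int.ediv_eq_zero_of_lt h0 h1, Int.emod_eq_of_lt h0 h1]
  simp

lemma periodicLift_shiftHom (hm : 0 < m) (f : FreeGroup ℤ) :
    periodicLift m c y (shiftHom m f) = c⁻¹ * periodicLift m c y f * c := by
  suffices H : (periodicLift m c y).comp (shiftHom m) =
      (MulAut.conj c⁻¹).toMonoidHom.comp (periodicLift m c y) by
    simpa using DFunLike.congr_fun H f
  ext j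
  have hm' : (m : ℤ) ≠ 0 := by omega
  simp only [MonoidHom.comp_apply, shiftHom_of, periodicLift_of, MulEquiv.toMonoidHom_eq_coe,
    MonoidHom.coe_coe, MulAut.conj_apply, inv_inv, Int.add_emod_right]
  rw [Int.add_ediv_of_dvd_right (dvd_refl _), Int.ediv_self hm']
  group

lemma periodicHom_ext (hm : 0 < m) {α β : FreeGroup ℤ →* H}
    (hα : ∀ f, α (shiftHom m f) = c⁻¹ * α f * c) (hβ : ∀ f, β (shiftHom m f) = c⁻¹ * β f * c)
    (h : ∀ a : ℕ, a < m → α (of (a : ℤ)) = β (of (a : ℤ))) : α = β := by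
  have key : ∀ j : ℤ, α (of (j + m)) = β (of (j + m)) ↔ α (of j) = β (of j) := by
    intro j
    rw [← shiftHom_of, hα, hβ]
    simp
  have key' : ∀ (j k : ℤ), α (of (j + m * k)) = β (of (j + m * k)) ↔ α (of j) = β (of j) := by
    intro j k
    induction k with
    | zero => simp
    | succ k ih => rw [mul_add, mul_one, ← add_assoc, key, ih]
    | pred k ih => rw [← key, ← ih]; ring_nf
  ext j
  rw [← Int.emod_add_mul_ediv j m, key']
  have h1 := Int.emod_nonneg j (b := m) (by omega)
  have h2 := Int.emod_lt_of_pos j (b := m) (by omega)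
  have := h (j % m).toNat (by omega)
  rwa [Int.toNat_of_nonneg h1] at this

end PeriodicLift

section AffineChain

open FreeGroup (of lift)

lemma chainProd_succ_left {G : Type*} [Group G] (q : ℕ → G) (d : ℕ) :
    chainProd q (d + 1) = q 0 * chainProd (fun i => q (i + 1)) d := by
  simp [chainProd, List.range_succ_eq_map, List.map_map, Function.comp_def]

lemma map_chainProd {G H F : Type*} [Group G] [Group H] [FunLike F G H] [MonoidHomClass F G H]
    (f : F) (q : ℕ → G) (d : ℕ) : f (chainProd q d) = chainProd (fun i => f (q i)) d := by
  simp [chainProd, map_list_prod, Function.comp_def]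

lemma chainProd_congr {G : Type*} [Group G] {q q' : ℕ → G} {d : ℕ} (h : ∀ i < d, q i = q' i) :
    chainProd q d = chainProd q' d := by
  simp only [chainProd]
  congr 1
  exact List.map_congr_left fun i hi => h i (List.mem_range.1 hi)

/-- An affine chain of length `K + 2` acting on the free group on `x_j`, `j ∈ ℤ`: the elements `s i`
depend only on `i` modulo `K + 2`, and `τ` acts as a rotation. -/
structure IsAffineChain {G : Type*} [Group G] (ρ : G →* MulAut (FreeGroup ℤ)) (s : ℕ → G) (τ : G)
    (K : ℕ) : Prop extends IsArtinChain ρ s (K + 1) where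
  rotate : ∀ i, τ * s i = s (i + 1) * τ
  periodic : ∀ i, s (i + (K + 2)) = s i
  map_rotation : ∀ j, ρ τ (of j) = of (j + 1)

namespace IsAffineChain

variable {G : Type*} [Group G] {ρ : G →* MulAut (FreeGroup ℤ)} {s : ℕ → G} {τ : G} {K : ℕ}

lemma rotation_mul_chainProd (h : IsAffineChain ρ s τ K) (d : ℕ) :
    τ * chainProd s d = chainProd (fun i => s (i + 1)) d * τ := by
  induction d with
  | zero => simp
  | succ d ih => rw [chainProd_succ, chainProd_succ, ← mul_assoc, ih, mul_assoc, h.rotate, mul_assoc]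

lemma chainProd_mul_chainProd (h : IsAffineChain ρ s τ K) :
    chainProd s (K + 1) * chainProd s K = chainProd (fun i => s (i + 1)) K * chainProd s (K + 1) := by
  suffices H : ∀ d ≤ K,
      chainProd s (K + 1) * chainProd s d = chainProd (fun i => s (i + 1)) d * chainProd s (K + 1)
    from H K le_rfl
  intro d hd
  induction d with
  | zero => simp
  | succ d ih =>
    rw [chainProd_succ s d, chainProd_succ _ d, ← mul_assoc, ih (by omega), mul_assoc,
      h.chainProd_mul (by omega) le_rfl, mul_assoc]

lemma isTypeBChain (h : IsAffineChain ρ s τ K) :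
    IsTypeBChain (fun d => s (K - d)) ((chainProd s (K + 1))⁻¹ * τ) (K + 1) where
  toIsBraidChain := h.toIsBraidChain.reverse
  quartic _ := by
    have e1 : s (K - 0) * ((chainProd s (K + 1))⁻¹ * τ) = (chainProd s K)⁻¹ * τ := by
      rw [chainProd_succ, Nat.sub_zero]; group
    have e2 : τ * (chainProd s K)⁻¹ = (chainProd (fun i => s (i + 1)) K)⁻¹ * τ := by
      rw [mul_inv_eq_iff_eq_mul, mul_assoc, h.rotation_mul_chainProd]; group
    have e3 : τ * τ * s K = s 0 * (τ * τ) := by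
      rw [mul_assoc, h.rotate, ← mul_assoc, h.rotate, mul_assoc]
      congr 1
      simpa [add_assoc] using h.periodic 0
    have e4 : s 0 * (chainProd (fun i => s (i + 1)) K * chainProd s K) =
        chainProd (fun i => s (i + 1)) K * chainProd s K * s K := by
      rw [← mul_assoc, ← chainProd_succ_left, h.chainProd_mul_chainProd, chainProd_succ, mul_assoc]
    have e5 : (chainProd s K)⁻¹ * τ * ((chainProd s K)⁻¹ * τ) =
        (chainProd (fun i => s (i + 1)) K * chainProd s K)⁻¹ * (τ * τ) := by
      rw [mul_assoc, ← mul_assoc τ, e2]; group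
    have e6 : Commute ((chainProd s K)⁻¹ * τ * ((chainProd s K)⁻¹ * τ)) (s K) := by
      rw [e5, Commute, SemiconjBy, mul_assoc, e3, inv_mul_eq_iff_eq_mul, ← mul_assoc, ← mul_assoc,
        ← e4]
      group
    calc _ = s (K - 0) * ((chainProd s (K + 1))⁻¹ * τ) *
          (s (K - 0) * ((chainProd s (K + 1))⁻¹ * τ)) := by group
      _ = (s K)⁻¹ * (s (K - 0) * ((chainProd s (K + 1))⁻¹ * τ) *
          (s (K - 0) * ((chainProd s (K + 1))⁻¹ * τ)) * s K) := by
        rw [e1, e6.eq, inv_mul_cancel_left]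
      _ = _ := by rw [Nat.sub_zero]; group
  comm_end i hi hi' := by
    have h1 := h.chainProd_mul (d := K + 1) (i := K - i) (by omega) le_rfl
    rw [Commute, SemiconjBy, mul_assoc, h.rotate, inv_mul_eq_iff_eq_mul, ← mul_assoc, ← mul_assoc,
      h1]
    group

lemma mem_closure (h : IsAffineChain ρ s τ K) {g : G}
    (hg : g ∈ Subgroup.closure (insert τ (Set.range s))) :
    g ∈ Subgroup.closure (insert ((chainProd s (K + 1))⁻¹ * τ)
      ((fun d => s (K - d)) '' Set.Iio (K + 1))) := by
  set B := Subgroup.closure (insert ((chainProd s (K + 1))⁻¹ * τ)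
      ((fun d => s (K - d)) '' Set.Iio (K + 1))) with hB
  have hs : ∀ i < K + 1, s i ∈ B := fun i hi => Subgroup.subset_closure
    (Or.inr ⟨K - i, by simp only [Set.mem_Iio]; omega, congrArg s (by omega)⟩)
  have hδ : chainProd s (K + 1) ∈ B := by
    refine Subgroup.list_prod_mem _ fun y hy => ?_
    obtain ⟨i, hi, rfl⟩ := List.mem_map.1 hy
    exact hs i (List.mem_range.1 hi)
  have hτ : τ ∈ B := by
    have := mul_mem hδ (Subgroup.subset_closure (Set.mem_insert ((chainProd s (K + 1))⁻¹ * τ)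
      ((fun d => s (K - d)) '' Set.Iio (K + 1))))
    rwa [mul_inv_cancel_left] at this
  have hall : ∀ i, s i ∈ B := by
    intro i
    induction i with
    | zero => exact hs 0 (by omega)
    | succ i ih =>
      rw [eq_mul_inv_of_mul_eq (h.rotate i).symm]
      exact mul_mem (mul_mem hτ ih) (inv_mem hτ)
  refine (Subgroup.closure_le B).2 ?_ hg
  rintro y (rfl | ⟨i, rfl⟩)
  exacts [hτ, hall i]

/-- The product `x_0 x_1 ⋯ x_{n - 1}`. -/
def boundary (n : ℕ) : FreeGroup ℤ := chainProd (fun i => of (i : ℤ)) n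

lemma boundary_succ (n : ℕ) : boundary (n + 1) = boundary n * of (n : ℤ) := chainProd_succ _ _

lemma boundary_succ_left (n : ℕ) :
    boundary (n + 1) = of 0 * chainProd (fun i => of ((i : ℤ) + 1)) n := by
  rw [boundary, chainProd_succ_left]
  simp

lemma map_boundary (h : IsAffineChain ρ s τ K) {i : ℕ} (hi : i < K + 1) :
    ρ (s i) (boundary (K + 2)) = boundary (K + 2) := by
  have h1 : ∀ d ≤ i, ρ (s i) (boundary d) = boundary d := by
    intro d hd
    rw [boundary, map_chainProd]
    exact chainProd_congr fun j hj =>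
      h.map_of_ne hi (by omega) (by omega) (by omega) (by omega)
  suffices H : ∀ d, i + 2 ≤ d → d ≤ K + 2 → ρ (s i) (boundary d) = boundary d from
    H _ (by omega) le_rfl
  intro d hd
  induction d, hd using Nat.le_induction with
  | base =>
    intro hd
    rw [boundary_succ, boundary_succ, map_mul, map_mul, h1 i le_rfl, h.map_of_self hi, Nat.cast_add,
      Nat.cast_one, h.map_of_succ hi]
    group
  | succ d hd' ih =>
    intro hd
    rw [boundary_succ, map_mul, ih (by omega),
      h.map_of_ne hi (by omega) (by omega) (by omega) (by omega)]

lemma map_chainProd_boundary (h : IsAffineChain ρ s τ K) :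
    ρ (chainProd s (K + 1)) (boundary (K + 2)) = boundary (K + 2) := by
  refine map_eq_of_mem_closure ρ (S := s '' Set.Iio (K + 1)) ?_ ?_
  · rintro _ ⟨i, hi, rfl⟩
    exact h.map_boundary hi
  · refine Subgroup.list_prod_mem _ fun y hy => ?_
    obtain ⟨i, hi, rfl⟩ := List.mem_map.1 hy
    exact Subgroup.subset_closure ⟨i, List.mem_range.1 hi, rfl⟩

lemma map_chainProd_of (h : IsAffineChain ρ s τ K) {i : ℕ} (hi : i < K + 1) :
    ρ (chainProd s (K + 1)) (of (i : ℤ)) = of ((i : ℤ) + 1) := by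
  have h1 : ∀ d ≤ K + 1, ∀ i : ℕ, d < i → i ≤ K + 1 →
      ρ (chainProd s d) (of (i : ℤ)) = of (i : ℤ) := by
    intro d hd i hi hi'
    induction d with
    | zero => simp
    | succ d ih =>
      rw [chainProd_succ, map_mul, MulAut.mul_apply,
        h.map_of_ne (by omega) (by omega) (by omega) (by omega) (by omega),
        ih (by omega) (by omega)]
  have h2 : ∀ d ≤ K + 1, ∀ i < d, ρ (chainProd s d) (of (i : ℤ)) = of ((i : ℤ) + 1) := by
    intro d hd i hi
    induction d with
    | zero => omega
    | succ d ih =>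
      rw [chainProd_succ, map_mul, MulAut.mul_apply]
      rcases Nat.lt_succ_iff_lt_or_eq.1 hi with hlt | rfl
      · rw [h.map_of_ne (by omega) (by omega) (by omega) (by omega) (by omega),
          ih (by omega) hlt]
      · rw [h.map_of_self (by omega)]
        exact_mod_cast h1 i (by omega) (i + 1) (by omega) (by omega)
  exact h2 _ le_rfl _ hi

lemma map_chainProd_of_last (h : IsAffineChain ρ s τ K) :
    ρ (chainProd s (K + 1)) (of ((K + 1 : ℕ) : ℤ)) =
      (boundary (K + 2))⁻¹ * of 0 * boundary (K + 2) := by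
  have h1 := h.map_chainProd_boundary
  rw [boundary_succ (K + 1), map_mul, ← eq_inv_mul_iff_mul_eq] at h1
  rw [h1, ← boundary_succ]
  congr 1
  rw [boundary_succ_left (K + 1), mul_inv_rev, inv_mul_cancel_right, boundary, map_chainProd,
    inv_inj]
  exact chainProd_congr fun i hi => h.map_chainProd_of hi

lemma map_rotation_boundary (h : IsAffineChain ρ s τ K) :
    ρ τ (boundary (K + 2)) = (of 0)⁻¹ * boundary (K + 2) * shiftHom (K + 2) (of 0) := by
  rw [shiftHom_of, zero_add, mul_assoc, ← boundary_succ, boundary_succ_left (K + 2),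
    inv_mul_cancel_left, boundary, map_chainProd]
  exact chainProd_congr fun i hi => h.map_rotation i

lemma map_rotation_pow (h : IsAffineChain ρ s τ K) (n : ℕ) (f : FreeGroup ℤ) :
    ρ (τ ^ n) f = shiftHom n f := by
  suffices H : (ρ (τ ^ n)).toMonoidHom = shiftHom n from DFunLike.congr_fun H f
  ext j
  change ρ (τ ^ n) (of j) = shiftHom n (of j)
  rw [shiftHom_of]
  induction n with
  | zero => simp
  | succ n ih =>
    rw [pow_succ', map_mul, MulAut.mul_apply, ih, h.map_rotation]
    push_cast
    rw [add_assoc]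

lemma map_shiftHom (h : IsAffineChain ρ s τ K) {g : G}
    (hg : g ∈ Subgroup.closure (insert τ (Set.range s))) (f : FreeGroup ℤ) :
    ρ g (shiftHom (K + 2) f) = shiftHom (K + 2) (ρ g f) := by
  have hs : ∀ n i, τ ^ n * s i = s (i + n) * τ ^ n := by
    intro n
    induction n with
    | zero => simp
    | succ n ih =>
      intro i
      rw [pow_succ, mul_assoc, h.rotate, ← mul_assoc, ih, mul_assoc, add_assoc, add_comm 1 n]
  have hle : Subgroup.closure (insert τ (Set.range s)) ≤ Subgroup.centralizer {τ ^ (K + 2)} := by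
    refine (Subgroup.closure_le _).2 ?_
    rintro y (rfl | ⟨i, rfl⟩)
    · exact Subgroup.mem_centralizer_singleton_iff.2 ((Commute.refl y).pow_right _)
    · refine Subgroup.mem_centralizer_singleton_iff.2 ?_
      rw [hs, h.periodic]
  have hc : g * τ ^ (K + 2) = τ ^ (K + 2) * g := Subgroup.mem_centralizer_singleton_iff.1 (hle hg)
  rw [← h.map_rotation_pow, ← h.map_rotation_pow, ← MulAut.mul_apply, ← MulAut.mul_apply, ← map_mul,
    ← map_mul, hc]

lemma eq_one_of_twisted_conj {m : ℕ} (hm : 0 < m) {f : FreeGroup ℤ}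
    (hf : f⁻¹ * boundary m * shiftHom m f = boundary m) :
    periodicLift m (boundary m) of f = 1 := by
  set T : Equiv.Perm (FreeGroup ℤ × Bool) := flipOne _ * leftTranslation (boundary m) with hT
  have hTz : ∀ (k : ℤ) z, ((T ^ k) z).1 = boundary m ^ k * z.1 := by
    intro k z
    have h1 : ∀ z, (T z).1 = boundary m * z.1 := fun z => by
      rw [hT, Equiv.Perm.mul_apply, flipOne_apply_fst, leftTranslation_apply]
    have := fst_apply_of_forall_of (α := Unit) (Θ := lift fun _ => T)
      (κ := lift fun _ => boundary m) (by simpa using h1) (of () ^ k) z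
    simpa using this
  let Θ : FreeGroup ℤ →* Equiv.Perm (FreeGroup ℤ × Bool) :=
    periodicLift m T fun j => leftTranslation (of j)
  refine eq_one_of_commute_flipOne (Θ := Θ) ?_ ?_
  · intro j z
    simp only [Θ, periodicLift_of, Equiv.Perm.mul_apply, hTz, leftTranslation_apply, mul_assoc]
  · have hb : Θ (boundary m) = leftTranslation (boundary m) := by
      have : ∀ d ≤ m, Θ (boundary d) = leftTranslation (boundary d) := by
        intro d hd
        induction d with
        | zero => ext1 z; simp [boundary]
        | succ d ih =>
          rw [boundary_succ, map_mul, ih (by omega), leftTranslation_mul]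
          congr 1
          exact periodicLift_of_lt (by omega) (by omega)
      exact this m le_rfl
    have h1 := congrArg Θ hf
    rw [map_mul, map_mul, map_inv, hb, periodicLift_shiftHom hm] at h1
    change (Θ f)⁻¹ * _ * (_ * Θ f * _) = _ at h1
    rw [hT, mul_inv_rev] at h1
    have h2 : (Θ f)⁻¹ * (flipOne _)⁻¹ * Θ f * flipOne (FreeGroup ℤ) = 1 := by
      rw [← mul_eq_right (b := leftTranslation (boundary m))]
      refine Eq.trans ?_ h1
      group
    rw [mul_eq_one_iff_eq_inv, mul_assoc, inv_mul_eq_iff_eq_mul, inv_mul_eq_iff_eq_mul,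
      ← mul_assoc, eq_mul_inv_iff_mul_eq] at h2
    exact h2

/-- The action of an affine chain is faithful on the group generated by the chain. -/
theorem eq_one_of_map_eq_one (h : IsAffineChain ρ s τ K)
    (hG : Subgroup.closure (insert τ (Set.range s)) = ⊤) {g : G} (hg : ρ g = 1) : g = 1 := by
  have htop : ∀ g, g ∈ Subgroup.closure (insert τ (Set.range s)) := fun g => hG ▸ Subgroup.mem_top g
  set c := boundary (K + 2) with hc
  set δ := chainProd s (K + 1) with hδ
  let κ : FreeGroup ℤ →* FreeGroup ℤ :=
    (MulAut.conj c⁻¹).toMonoidHom.comp (periodicLift (K + 2) c of)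
  have hκ : ∀ f, κ f = c⁻¹ * periodicLift (K + 2) c of f * c := fun f => by simp [κ]
  have hκsh : ∀ f, κ (shiftHom (K + 2) f) = c⁻¹ * κ f * c := fun f => by
    rw [hκ, hκ, periodicLift_shiftHom (by omega)]
  have hκof : ∀ a : ℤ, 0 ≤ a → a < (K + 2 : ℕ) → κ (of a) = c⁻¹ * of a * c := fun a h0 h1 => by
    rw [hκ, periodicLift_of_lt h0 h1]
  have hκs : ∀ i < K + 1, ∀ f, κ (ρ (s i) f) = ρ (s i) (κ f) := by
    intro i hi
    refine DFunLike.congr_fun (f := κ.comp (ρ (s i)).toMonoidHom)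
      (g := (ρ (s i)).toMonoidHom.comp κ) (periodicHom_ext (m := K + 2) (c := c) (by omega) ?_ ?_ ?_)
    · intro f
      change κ (ρ (s i) (shiftHom (K + 2) f)) = _ * κ (ρ (s i) f) * _
      rw [h.map_shiftHom (htop _), hκsh]
    · intro f
      change ρ (s i) (κ (shiftHom (K + 2) f)) = _ * ρ (s i) (κ f) * _
      rw [hκsh, map_mul, map_mul, map_inv, h.map_boundary hi]
    · intro a ha
      change κ (ρ (s i) (of (a : ℤ))) = ρ (s i) (κ (of (a : ℤ)))
      rw [hκof a (by omega) (by omega), map_mul, map_mul, map_inv, h.map_boundary hi, ← hc]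
      by_cases h1 : a = i
      · rw [h1, h.map_of_self hi, hκof _ (by omega) (by omega)]
      by_cases h2 : a = i + 1
      · rw [h2, Nat.cast_add, Nat.cast_one, h.map_of_succ hi, map_mul, map_mul, map_inv,
          hκof _ (by omega) (by omega), hκof _ (by omega) (by omega)]
        group
      · rw [h.map_of_ne hi (by omega) (by omega) (by omega) (by omega),
          hκof _ (by omega) (by omega)]
  have hκδ : ∀ f, κ (ρ δ f) = ρ δ (κ f) := by
    have : ∀ d ≤ K + 1, ∀ f, κ (ρ (chainProd s d) f) = ρ (chainProd s d) (κ f) := by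
      intro d hd
      induction d with
      | zero => simp
      | succ d ih =>
        intro f
        rw [chainProd_succ, map_mul, MulAut.mul_apply, MulAut.mul_apply, ih (by omega),
          hκs d (by omega)]
    exact this _ le_rfl
  have hκτ : ∀ f, κ (ρ τ f) = ρ δ (κ f) := by
    refine DFunLike.congr_fun (f := κ.comp (ρ τ).toMonoidHom)
      (g := (ρ δ).toMonoidHom.comp κ) (periodicHom_ext (m := K + 2) (c := c) (by omega) ?_ ?_ ?_)
    · intro f
      change κ (ρ τ (shiftHom (K + 2) f)) = _ * κ (ρ τ f) * _
      rw [h.map_shiftHom (htop _), hκsh]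
    · intro f
      change ρ δ (κ (shiftHom (K + 2) f)) = _ * ρ δ (κ f) * _
      rw [hκsh, map_mul, map_mul, map_inv, h.map_chainProd_boundary]
    · intro a ha
      change κ (ρ τ (of (a : ℤ))) = ρ δ (κ (of (a : ℤ)))
      rw [hκof a (by omega) (by omega), map_mul, map_mul, map_inv, h.map_chainProd_boundary,
        h.map_rotation]
      rcases Nat.lt_succ_iff_lt_or_eq.1 ha with hlt | rfl
      · rw [h.map_chainProd_of hlt, hκof _ (by omega) (by omega)]
      · rw [h.map_chainProd_of_last, show ((K + 1 : ℕ) : ℤ) + 1 = 0 + (K + 2 : ℕ) by push_cast; ring,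
          ← shiftHom_of, hκsh, hκof _ le_rfl (by omega)]
  have hδb : ∀ f, ρ δ (ρ (δ⁻¹ * τ) f) = ρ τ f := fun f => by
    rw [← MulAut.mul_apply, ← map_mul, mul_inv_cancel_left]
  have hδinv : ρ δ (ρ δ⁻¹ (of 0)) = of 0 := by
    rw [← MulAut.mul_apply, ← map_mul, mul_inv_cancel, map_one, MulAut.one_apply]
  have hmem : g ∈ Subgroup.closure ((fun d => s (K - d)) '' Set.Iio (K + 1)) := by
    refine h.isTypeBChain.mem_closure_of_map_eq ρ (shiftHom (K + 2)) κ (c := c) (p := ρ δ⁻¹ (of 0))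
      (x := fun d => of ((K : ℤ) + 1 - d)) (fun g => h.map_shiftHom (htop g)) ?_ ?_ ?_ ?_ ?_ ?_ ?_ ?_
      (h.mem_closure (htop g)) ?_
    · exact fun i hi => hκs _ (by omega)
    · intro f
      apply (ρ δ).injective
      rw [← hκδ, hδb, hκτ]
    · exact fun i hi => h.map_boundary (by omega)
    · apply (ρ δ).injective
      rw [hδb, h.map_rotation_boundary, map_mul, map_mul, map_inv, h.map_shiftHom (htop _), hδinv,
        h.map_chainProd_boundary]
    · apply (ρ δ).injective
      rw [← hκδ, hδinv, hκof 0 le_rfl (by omega), ← h.map_chainProd_of_last]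
      simp [hδ]
    · intro i hi
      have := h.map_of_self (i := K - i) (by omega)
      convert this using 3
      · push_cast [show i ≤ K by omega]; ring
      · push_cast [show i ≤ K by omega]; ring
    · exact lift_of_sub_injective _ _
    · intro f hf
      rw [hκ, eq_one_of_twisted_conj (by omega) hf]
      simp
    · rw [hg, MulAut.one_apply]
  refine h.toIsArtinChain.eq_one_of_map_eq_one le_rfl ?_ hg
  refine Subgroup.closure_mono ?_ hmem
  rintro _ ⟨d, hd, rfl⟩
  exact ⟨K - d, by simp only [Set.mem_Iio] at *; omega, rfl⟩

end IsAffineChain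

end AffineChain

section AffineBraid

open FreeGroup (of lift)

lemma affineBraidGen_braid {n : ℕ} (hn : 2 < n) (i : ZMod n) :
    affineBraidGen n i * affineBraidGen n (i + 1) * affineBraidGen n i =
      affineBraidGen n (i + 1) * affineBraidGen n i * affineBraidGen n (i + 1) := by
  have : braidRelWord i (i + 1) ∈ affineBraidRels n := by
    rw [affineBraidRels, if_neg (by omega)]
    exact Or.inl ⟨i, rfl⟩
  have := PresentedGroup.one_of_mem this
  rw [braidRelWord, map_mul, map_inv, mul_inv_eq_one] at this
  exact this

lemma affineBraidGen_commute {n : ℕ} (hn : 2 < n) {i j : ZMod n} (h : i - j ≠ 1) (h' : i - j ≠ -1) :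
    Commute (affineBraidGen n i) (affineBraidGen n j) := by
  have : commRelWord i j ∈ affineBraidRels n := by
    rw [affineBraidRels, if_neg (by omega)]
    exact Or.inr ⟨i, j, h, h', rfl⟩
  have := PresentedGroup.one_of_mem this
  rw [commRelWord, map_mul, map_inv, mul_inv_eq_one] at this
  exact this

/-- The homomorphism out of the affine braid group given by a family satisfying its relations. -/
def affineBraidLift {H : Type*} [Group H] {n : ℕ} (f : ZMod n → H)
    (hb : 2 < n → ∀ i, f i * f (i + 1) * f i = f (i + 1) * f i * f (i + 1))
    (hc : 2 < n → ∀ i j, i - j ≠ 1 → i - j ≠ -1 → Commute (f i) (f j)) : AffineBraidGroup n →* H :=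
  PresentedGroup.toGroup (f := f) (by
    intro r hr
    rw [affineBraidRels] at hr
    split_ifs at hr with hn
    · exact absurd hr (Set.notMem_empty r)
    · push Not at hn
      rcases hr with ⟨i, rfl⟩ | ⟨i, j, h1, h2, rfl⟩
      · rw [braidRelWord, map_mul, map_inv, mul_inv_eq_one]
        simpa using hb hn i
      · rw [commRelWord, map_mul, map_inv, mul_inv_eq_one]
        simpa using (hc hn i j h1 h2).eq)

section Lift

variable {H : Type*} [Group H] {n : ℕ}

@[simp] lemma affineBraidLift_gen {f : ZMod n → H} {hb hc} (i : ZMod n) :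
    affineBraidLift f hb hc (affineBraidGen n i) = f i :=
  PresentedGroup.toGroup.of _

lemma affineBraid_hom_ext {f g : AffineBraidGroup n →* H}
    (h : ∀ i, f (affineBraidGen n i) = g (affineBraidGen n i)) : f = g :=
  PresentedGroup.ext h

end Lift

/-- The integers in a given residue class. -/
def residueSet (n : ℕ) (i : ZMod n) : Set ℤ := {j | (j : ZMod n) = i}

lemma isSparse_residueSet {n : ℕ} (hn : 2 ≤ n) (i : ZMod n) : IsSparse (residueSet n i) := by
  have : Fact (1 < n) := ⟨hn⟩
  intro j hj hj'
  simp only [residueSet, Set.mem_ofPred_eq, Int.cast_add, Int.cast_one] at hj hj'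
  rw [hj] at hj'
  simp at hj'

lemma zmod_two_ne_zero {n : ℕ} (hn : 2 < n) : (2 : ZMod n) ≠ 0 := by
  intro h
  have : ((2 : ℕ) : ZMod n) = 0 := by exact_mod_cast h
  rw [ZMod.natCast_eq_zero_iff] at this
  exact absurd (Nat.le_of_dvd (by omega) this) (by omega)

/-- The action of the affine braid group on the free group on `x_j`, `j ∈ ℤ`, where `s_i` acts by
half twists at all the integers congruent to `i`. -/
noncomputable def affineAction {n : ℕ} (hn : 2 ≤ n) : AffineBraidGroup n →* MulAut (FreeGroup ℤ) :=
  affineBraidLift (fun i => halfTwists (residueSet n i) (isSparse_residueSet hn i))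
    (by
      intro hn' i
      refine halfTwists_braid _ (fun j => by simp [residueSet]) fun j hj hj' => ?_
      simp only [residueSet, Set.mem_ofPred_eq, Int.cast_add, Int.cast_ofNat] at hj hj'
      rw [hj] at hj'
      exact zmod_two_ne_zero hn' (by simpa using hj'))
    (by
      intro hn' i j h1 h2
      by_cases hij : i = j
      · rw [hij]
      refine halfTwists_commute _ ?_ ?_
      · have a1 := isSparse_residueSet hn i
        have a2 := isSparse_residueSet hn j
        rintro k (hk | hk) (hk' | hk')
        · exact a1 k hk hk'
        · simp only [residueSet, Set.mem_ofPred_eq, Int.cast_add, Int.cast_one] at hk hk'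
          apply h2
          rw [← hk, ← hk']; ring
        · simp only [residueSet, Set.mem_ofPred_eq, Int.cast_add, Int.cast_one] at hk hk'
          apply h1
          rw [← hk, ← hk']; ring
        · exact a2 k hk hk'
      · rw [Set.disjoint_left]
        intro k hk hk'
        exact hij (hk.symm.trans hk'))

lemma affineAction_gen {n : ℕ} (hn : 2 ≤ n) (i : ZMod n) :
    affineAction hn (affineBraidGen n i) =
      halfTwists (residueSet n i) (isSparse_residueSet hn i) :=
  affineBraidLift_gen i

/-- The translation `s_i ↦ s_{i + k}` of the affine braid group. -/
def affineBraidTranslate (n : ℕ) (k : ZMod n) : AffineBraidGroup n →* AffineBraidGroup n :=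
  affineBraidLift (fun i => affineBraidGen n (i + k))
    (fun hn i => by
      rw [add_right_comm]
      exact affineBraidGen_braid hn _)
    (fun hn i j h1 h2 => affineBraidGen_commute hn (by simpa using h1) (by simpa using h2))

/-- The automorphism `s_i ↦ s_{i + 1}` of the affine braid group. -/
def affineBraidRotate (n : ℕ) : MulAut (AffineBraidGroup n) :=
  MonoidHom.toMulEquiv (affineBraidTranslate n 1) (affineBraidTranslate n (-1))
    (affineBraid_hom_ext fun i => by simp [affineBraidTranslate])
    (affineBraid_hom_ext fun i => by simp [affineBraidTranslate])

lemma affineBraidRotate_gen (n : ℕ) (i : ZMod n) :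
    affineBraidRotate n (affineBraidGen n i) = affineBraidGen n (i + 1) := by
  change affineBraidTranslate n 1 (affineBraidGen n i) = _
  rw [affineBraidTranslate, affineBraidLift_gen]

/-- The automorphism `x_j ↦ x_{j + 1}` of the free group on `x_j`, `j ∈ ℤ`. -/
def freeShift : MulAut (FreeGroup ℤ) := FreeGroup.freeGroupCongr (Equiv.addRight 1)

lemma freeShift_of (j : ℤ) : freeShift (of j) = of (j + 1) := by simp [freeShift]

lemma affineAction_rotate {n : ℕ} (hn : 2 ≤ n) (x : AffineBraidGroup n) :
    affineAction hn (affineBraidRotate n x) = freeShift * affineAction hn x * freeShift⁻¹ := by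
  suffices H : (affineAction hn).comp (affineBraidRotate n).toMonoidHom =
      (MulAut.conj freeShift).toMonoidHom.comp (affineAction hn) from DFunLike.congr_fun H x
  refine affineBraid_hom_ext fun i => ?_
  change affineAction hn (affineBraidRotate n (affineBraidGen n i)) =
    freeShift * affineAction hn (affineBraidGen n i) * freeShift⁻¹
  rw [affineBraidRotate_gen, affineAction_gen, affineAction_gen, eq_mul_inv_iff_mul_eq]
  refine mulAut_freeGroup_ext fun j => ?_
  have h1 : ∀ j : ℤ, j + 1 ∈ residueSet n (i + 1) ↔ j ∈ residueSet n i := by simp [residueSet]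
  have e : j + 1 - 1 = j - 1 + 1 := by ring
  rw [MulAut.mul_apply, MulAut.mul_apply, freeShift_of]
  by_cases hj : j ∈ residueSet n i
  · rw [halfTwists_of_mem hj, halfTwists_of_mem ((h1 j).2 hj), freeShift_of]
  by_cases hj' : j - 1 ∈ residueSet n i
  · rw [halfTwists_of_sub_one_mem hj', halfTwists_of_sub_one_mem (by rwa [e, h1]), e]
    simp only [map_mul, map_inv, freeShift_of]
  · rw [halfTwists_of_notMem hj hj', halfTwists_of_notMem (by rwa [h1]) (by rwa [e, h1]),
      freeShift_of]

/-- The extended affine braid group. -/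
abbrev ExtendedAffineBraidGroup (n : ℕ) :=
  AffineBraidGroup n ⋊[zpowersHom (MulAut (AffineBraidGroup n)) (affineBraidRotate n)]
    Multiplicative ℤ

/-- The action of the extended affine braid group on the free group on `x_j`, `j ∈ ℤ`. -/
noncomputable def extendedAction {n : ℕ} (hn : 2 ≤ n) :
    ExtendedAffineBraidGroup n →* MulAut (FreeGroup ℤ) :=
  SemidirectProduct.lift (affineAction hn) (zpowersHom _ freeShift) (by
    intro k
    induction k using Multiplicative.rec with | _ k
    refine MonoidHom.ext fun x => ?_
    change affineAction hn ((affineBraidRotate n ^ k) x) =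
      freeShift ^ k * affineAction hn x * (freeShift ^ k)⁻¹
    have h1 : ∀ y, affineAction hn ((affineBraidRotate n)⁻¹ y) =
        freeShift⁻¹ * affineAction hn y * freeShift := by
      intro y
      have := affineAction_rotate hn ((affineBraidRotate n)⁻¹ y)
      rw [MulAut.apply_inv_self] at this
      rw [this]
      group
    induction k with
    | zero => simp
    | succ k ih =>
      rw [add_comm, zpow_one_add, MulAut.mul_apply, affineAction_rotate, ih, zpow_one_add]
      group
    | pred k ih =>
      rw [show -(k : ℤ) - 1 = -1 + -k by ring, zpow_add, zpow_neg_one, MulAut.mul_apply, h1, ih,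
        zpow_add, zpow_neg_one]
      group)

/-- The generator of the extended affine braid group acting as a rotation. -/
def extendedRotation (n : ℕ) : ExtendedAffineBraidGroup n :=
  SemidirectProduct.inr (Multiplicative.ofAdd 1)

lemma isAffineChain_extendedAction (K : ℕ) :
    IsAffineChain (extendedAction (n := K + 2) (by omega))
      (fun i => SemidirectProduct.inl (affineBraidGen (K + 2) (i : ZMod (K + 2))))
      (extendedRotation (K + 2)) K where
  braid i hi := by
    simp only [← map_mul]
    rw [Nat.cast_add, Nat.cast_one, affineBraidGen_braid (by omega)]
  comm i j hij hj := by
    refine Commute.map (affineBraidGen_commute (by omega) ?_ ?_) SemidirectProduct.inl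
    · intro h
      have : ((j - i + 1 : ℕ) : ZMod (K + 2)) = 0 := by
        push_cast [show i ≤ j by omega]
        linear_combination -h
      rw [ZMod.natCast_eq_zero_iff] at this
      exact absurd (Nat.le_of_dvd (by omega) this) (by omega)
    · intro h
      have : ((j - i - 1 : ℕ) : ZMod (K + 2)) = 0 := by
        push_cast [show i ≤ j by omega, show 1 ≤ j - i by omega]
        linear_combination -h
      rw [ZMod.natCast_eq_zero_iff] at this
      exact absurd (Nat.le_of_dvd (by omega) this) (by omega)
  eq_halfTwists i hi := by
    refine ⟨_, _, (SemidirectProduct.lift_inl _ _ _ _).trans (affineAction_gen _ _),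
      by simp [residueSet], fun j hj => ?_⟩
    have : (j : ZMod (K + 2)) = (i : ℤ) := by simpa [residueSet] using hj
    rw [ZMod.intCast_eq_intCast_iff_dvd_sub] at this
    obtain ⟨c, hc⟩ := this
    rcases lt_trichotomy c 0 with h | h | h
    · have : ((K + 2 : ℕ) : ℤ) * c ≤ ((K + 2 : ℕ) : ℤ) * (-1) := by gcongr; omega
      omega
    · subst h; omega
    · have : ((K + 2 : ℕ) : ℤ) * 1 ≤ ((K + 2 : ℕ) : ℤ) * c := by gcongr; omega
      omega
  rotate i := by
    have := SemidirectProduct.inl_aut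
      (φ := zpowersHom (MulAut (AffineBraidGroup (K + 2))) (affineBraidRotate (K + 2)))
      (Multiplicative.ofAdd 1) (affineBraidGen (K + 2) (i : ZMod (K + 2)))
    rw [zpowersHom_apply, toAdd_ofAdd, zpow_one, affineBraidRotate_gen, map_inv,
      eq_mul_inv_iff_mul_eq] at this
    rw [Nat.cast_add, Nat.cast_one]
    exact this.symm
  periodic i := by
    have : ((i + (K + 2) : ℕ) : ZMod (K + 2)) = i := by
      rw [Nat.cast_add, ZMod.natCast_self, add_zero]
    rw [this]
  map_rotation j := by
    rw [extendedAction, extendedRotation, SemidirectProduct.lift_inr, zpowersHom_apply, toAdd_ofAdd,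
      zpow_one, freeShift_of]

lemma closure_extendedAffineBraidGroup {n : ℕ} (hn : 2 ≤ n) :
    Subgroup.closure (insert (extendedRotation n) (Set.range fun i : ℕ =>
      (SemidirectProduct.inl (affineBraidGen n (i : ZMod n)) : ExtendedAffineBraidGroup n))) = ⊤ := by
  have : NeZero n := ⟨by omega⟩
  rw [eq_top_iff]
  intro g _
  rw [← SemidirectProduct.inl_left_mul_inr_right g]
  refine mul_mem ?_ ?_
  · have h1 : g.left ∈ Subgroup.closure (Set.range (affineBraidGen n)) := by
      have := PresentedGroup.closure_range_of (affineBraidRels n)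
      change Subgroup.closure (Set.range (affineBraidGen n)) = ⊤ at this
      rw [this]
      exact Subgroup.mem_top _
    have h2 := Subgroup.mem_map_of_mem (SemidirectProduct.inl (φ :=
      zpowersHom (MulAut (AffineBraidGroup n)) (affineBraidRotate n))) h1
    rw [MonoidHom.map_closure] at h2
    refine Subgroup.closure_mono ?_ h2
    rintro _ ⟨_, ⟨i, rfl⟩, rfl⟩
    exact Or.inr ⟨i.val, by simp⟩
  · have : (SemidirectProduct.inr g.right : ExtendedAffineBraidGroup n) =
        extendedRotation n ^ Multiplicative.toAdd g.right := by
      rw [extendedRotation, ← map_zpow, ← ofAdd_zsmul]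
      simp
    rw [this]
    exact zpow_mem (Subgroup.subset_closure (Set.mem_insert _ _)) _

/-- The action of the affine braid group on the free group on `x_j`, `j ∈ ℤ`, is faithful. -/
theorem affineAction_injective {n : ℕ} (hn : 2 ≤ n) : Function.Injective (affineAction hn) := by
  rw [injective_iff_map_eq_one]
  intro g hg
  obtain ⟨K, rfl⟩ : ∃ K, n = K + 2 := ⟨n - 2, by omega⟩
  have h1 : extendedAction hn (SemidirectProduct.inl g) = 1 :=
    (SemidirectProduct.lift_inl _ _ _ _).trans hg
  have h2 := (isAffineChain_extendedAction K).eq_one_of_map_eq_one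
    (closure_extendedAffineBraidGroup hn) h1
  exact SemidirectProduct.inl_injective (h2.trans (map_one _).symm)

end AffineBraid

section LiftedGen

lemma commute_chainProd_right {G : Type*} [Group G] {g : G} {q : ℕ → G} {d : ℕ}
    (h : ∀ i < d, Commute g (q i)) : Commute g (chainProd q d) :=
  Commute.list_prod_right _ _ fun y hy => by
    obtain ⟨i, hi, rfl⟩ := List.mem_map.1 hy
    exact h i (List.mem_range.1 hi)

lemma chainProd_braid {G : Type*} [Group G] {a b : ℕ → G} {t : ℕ}
    (ha : ∀ k l, Commute (a k) (a l)) (hb : ∀ k l, Commute (b k) (b l))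
    (hab : ∀ k < t, ∀ l < t, k ≠ l → Commute (a k) (b l))
    (h : ∀ k < t, a k * b k * a k = b k * a k * b k) :
    chainProd a t * chainProd b t * chainProd a t =
      chainProd b t * chainProd a t * chainProd b t := by
  have key : ∀ {A B x y : G}, Commute x A → Commute x B → Commute y A →
      A * x * (B * y) * (A * x) = A * B * A * (x * y * x) := by
    intro A B x y h1 h2 h3
    calc A * x * (B * y) * (A * x) = A * (x * B) * (y * A) * x := by group
      _ = A * B * x * A * y * x := by rw [h2.eq, h3.eq]; group
      _ = A * B * (x * A) * (y * x) := by group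
      _ = _ := by rw [h1.eq]; group
  induction t with
  | zero => simp
  | succ t ih =>
    have a1 : Commute (a t) (chainProd a t) := commute_chainProd_right fun i _ => ha _ _
    have a2 : Commute (a t) (chainProd b t) :=
      commute_chainProd_right fun i hi => hab _ (by omega) _ (by omega) (by omega)
    have b1 : Commute (b t) (chainProd a t) :=
      commute_chainProd_right fun i hi => (hab _ (by omega) _ (by omega) (by omega)).symm
    have b2 : Commute (b t) (chainProd b t) := commute_chainProd_right fun i _ => hb _ _
    rw [chainProd_succ, chainProd_succ, key a1 a2 b1, key b2 b1 a2, h t (by omega),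
      ih (fun k hk l hl => hab k (by omega) l (by omega)) fun k hk => h k (by omega)]

variable {m t : ℕ}

lemma affineBraidGen_commute_of_cast (hm : 2 ≤ m) (ht : 2 ≤ t) {a b : ℕ}
    (h1 : (a : ZMod m) - b ≠ 1) (h2 : (a : ZMod m) - b ≠ -1) :
    Commute (affineBraidGen (t * m) (a : ZMod (t * m)))
      (affineBraidGen (t * m) (b : ZMod (t * m))) := by
  refine affineBraidGen_commute (by nlinarith) (fun h => h1 ?_) fun h => h2 ?_
  · simpa using congrArg (ZMod.castHom (Dvd.intro_left t rfl : m ∣ t * m) (ZMod m)) h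
  · simpa using congrArg (ZMod.castHom (Dvd.intro_left t rfl : m ∣ t * m) (ZMod m)) h

lemma affineBraidGen_commute_add_mul (hm : 2 ≤ m) (ht : 2 ≤ t) (a k l : ℕ) :
    Commute (affineBraidGen (t * m) ((a + k * m : ℕ) : ZMod (t * m)))
      (affineBraidGen (t * m) ((a + l * m : ℕ) : ZMod (t * m))) := by
  have : Fact (1 < m) := ⟨hm⟩
  apply affineBraidGen_commute_of_cast hm ht <;> simp

/-- The product defining `liftedGen` does not depend on the representative of the residue class. -/
lemma liftedGen_natCast (hm : 2 ≤ m) (ht : 2 ≤ t) (a : ℕ) :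
    liftedGen m t (a : ZMod m) =
      chainProd (fun k => affineBraidGen (t * m) ((a + k * m : ℕ) : ZMod (t * m))) t := by
  have step : ∀ a : ℕ,
      chainProd (fun k => affineBraidGen (t * m) ((a + m + k * m : ℕ) : ZMod (t * m))) t =
      chainProd (fun k => affineBraidGen (t * m) ((a + k * m : ℕ) : ZMod (t * m))) t := by
    intro a
    have h1 := chainProd_succ_left
      (fun k => affineBraidGen (t * m) ((a + k * m : ℕ) : ZMod (t * m))) t
    rw [chainProd_succ, Nat.cast_add a (t * m), ZMod.natCast_self, add_zero,
      ← (commute_chainProd_right (d := t) (q := fun k => affineBraidGen (t * m)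
        ((a + k * m : ℕ) : ZMod (t * m))) fun i _ => by
          simpa using affineBraidGen_commute_add_mul hm ht a 0 i).eq, zero_mul, add_zero,
      mul_right_inj] at h1
    rw [h1]
    exact chainProd_congr fun k _ => by rw [show a + m + k * m = a + (k + 1) * m by ring]
  have steps : ∀ c a : ℕ,
      chainProd (fun k => affineBraidGen (t * m) ((a + m * c + k * m : ℕ) : ZMod (t * m))) t =
      chainProd (fun k => affineBraidGen (t * m) ((a + k * m : ℕ) : ZMod (t * m))) t := by
    intro c a
    induction c with
    | zero => simp
    | succ c ih => rw [← ih, ← step (a + m * c), mul_add, mul_one, ← add_assoc]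
  change chainProd (fun k => affineBraidGen (t * m)
    (((a : ZMod m).val + k * m : ℕ) : ZMod (t * m))) t = _
  rw [ZMod.val_natCast, ← steps (a / m) (a % m), Nat.mod_add_div]

lemma liftedGen_commute (hm : 2 ≤ m) (ht : 2 ≤ t) {i j : ZMod m} (h1 : i - j ≠ 1)
    (h2 : i - j ≠ -1) : Commute (liftedGen m t i) (liftedGen m t j) := by
  have : NeZero m := ⟨by omega⟩
  obtain ⟨a, rfl⟩ : ∃ a : ℕ, i = a := ⟨i.val, by simp⟩
  obtain ⟨b, rfl⟩ : ∃ b : ℕ, j = b := ⟨j.val, by simp⟩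
  rw [liftedGen_natCast hm ht, liftedGen_natCast hm ht]
  refine commute_chainProd_right fun k _ => (commute_chainProd_right fun l _ => ?_).symm
  apply Commute.symm
  apply affineBraidGen_commute_of_cast hm ht <;> simpa

lemma liftedGen_braid (hm : 2 < m) (ht : 2 ≤ t) (i : ZMod m) :
    liftedGen m t i * liftedGen m t (i + 1) * liftedGen m t i =
      liftedGen m t (i + 1) * liftedGen m t i * liftedGen m t (i + 1) := by
  have : NeZero m := ⟨by omega⟩
  obtain ⟨a, rfl⟩ : ∃ a : ℕ, i = a := ⟨i.val, by simp⟩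
  rw [show (a : ZMod m) + 1 = (a + 1 : ℕ) by push_cast; rfl, liftedGen_natCast hm.le ht,
    liftedGen_natCast hm.le ht]
  refine chainProd_braid (fun k l => affineBraidGen_commute_add_mul hm.le ht a k l)
    (fun k l => affineBraidGen_commute_add_mul hm.le ht (a + 1) k l) ?_ ?_
  · intro k hk l hl hkl
    refine affineBraidGen_commute (by nlinarith) (fun h => ?_) fun h => hkl ?_
    · have h' := congrArg (ZMod.castHom (Dvd.intro_left t rfl : m ∣ t * m) (ZMod m)) h
      refine zmod_two_ne_zero hm ?_
      simp at h'
      linear_combination -h'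
    · have h' : ((k * m : ℕ) : ZMod (t * m)) = ((l * m : ℕ) : ZMod (t * m)) := by
        push_cast at h ⊢
        linear_combination h
      rw [ZMod.natCast_eq_natCast_iff', Nat.mul_mod_mul_right, Nat.mul_mod_mul_right,
        Nat.mod_eq_of_lt hk, Nat.mod_eq_of_lt hl] at h'
      exact Nat.eq_of_mul_eq_mul_right (by omega) h'
  · intro k _
    have := affineBraidGen_braid (n := t * m) (by nlinarith) ((a + k * m : ℕ) : ZMod (t * m))
    rwa [show ((a + k * m : ℕ) : ZMod (t * m)) + 1 = ((a + 1 + k * m : ℕ) : ZMod (t * m)) by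
      push_cast; ring] at this

lemma affineAction_liftedGen (hm : 2 ≤ m) (ht : 2 ≤ t) (htm : 2 ≤ t * m) (i : ZMod m) :
    affineAction htm (liftedGen m t i) = affineAction hm (affineBraidGen m i) := by
  have : NeZero m := ⟨by omega⟩
  have : Fact (1 < m) := ⟨hm⟩
  have sub : ∀ k : ℕ, residueSet (t * m) ((i.val + k * m : ℕ) : ZMod (t * m)) ⊆ residueSet m i := by
    intro k j hj
    have := congrArg (ZMod.castHom (Dvd.intro_left t rfl : m ∣ t * m) (ZMod m)) hj
    rw [map_intCast, map_natCast] at this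
    simpa [residueSet] using this
  have key : ∀ d ≤ t, ∃ hT : IsSparse (⋃ k ∈ Set.Iio d,
      residueSet (t * m) ((i.val + k * m : ℕ) : ZMod (t * m))),
      affineAction htm (chainProd (fun k => affineBraidGen (t * m)
        ((i.val + k * m : ℕ) : ZMod (t * m))) d) = halfTwists _ hT := by
    intro d hd
    have hs : ∀ d, IsSparse (⋃ k ∈ Set.Iio d,
        residueSet (t * m) ((i.val + k * m : ℕ) : ZMod (t * m))) := by
      intro d j hj hj'
      exact isSparse_residueSet hm i j (Set.iUnion₂_subset (fun k _ => sub k) hj)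
        (Set.iUnion₂_subset (fun k _ => sub k) hj')
    refine ⟨hs d, ?_⟩
    induction d with
    | zero =>
      refine mulAut_freeGroup_ext fun j => ?_
      rw [halfTwists_of_notMem (by simp) (by simp)]
      simp
    | succ d ih =>
      have hU : (⋃ k ∈ Set.Iio d, residueSet (t * m) ((i.val + k * m : ℕ) : ZMod (t * m))) ∪
          residueSet (t * m) ((i.val + d * m : ℕ) : ZMod (t * m)) =
          ⋃ k ∈ Set.Iio (d + 1), residueSet (t * m) ((i.val + k * m : ℕ) : ZMod (t * m)) := by
        rw [show Set.Iio (d + 1) = insert d (Set.Iio d) by ext; simp, Set.biUnion_insert,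
          Set.union_comm]
      rw [chainProd_succ, map_mul, ih (by omega), affineAction_gen,
        halfTwists_mul _ (by rw [hU]; exact hs _) ?_]
      · exact halfTwists_congr hU
      · rw [Set.disjoint_left]
        rintro j hj hj'
        obtain ⟨k, hk, hj⟩ := Set.mem_iUnion₂.1 hj
        have h' : ((i.val + k * m : ℕ) : ZMod (t * m)) = ((i.val + d * m : ℕ) : ZMod (t * m)) :=
          Eq.trans (Eq.symm hj) hj'
        have hk' : k < d := hk
        replace h' : ((k * m : ℕ) : ZMod (t * m)) = ((d * m : ℕ) : ZMod (t * m)) := by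
          push_cast at h' ⊢
          linear_combination h'
        rw [ZMod.natCast_eq_natCast_iff', Nat.mul_mod_mul_right, Nat.mul_mod_mul_right,
          Nat.mod_eq_of_lt (by omega), Nat.mod_eq_of_lt (by omega)] at h'
        have := Nat.eq_of_mul_eq_mul_right (by omega) h'
        omega
  obtain ⟨hT, h1⟩ := key t le_rfl
  rw [affineAction_gen]
  refine h1.trans (halfTwists_congr (Set.Subset.antisymm (Set.iUnion₂_subset fun k _ => sub k) ?_))
  intro j hj
  have hj' : ((i.val : ℤ) : ZMod m) = j := by
    have : (j : ZMod m) = i := hj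
    simp [this]
  rw [ZMod.intCast_eq_intCast_iff_dvd_sub] at hj'
  obtain ⟨c, hc⟩ := hj'
  have c0 := Int.emod_nonneg c (b := t) (by omega)
  have c1 := Int.emod_lt_of_pos c (b := t) (by omega)
  refine Set.mem_iUnion₂.2 ⟨(c % t).toNat, by simp only [Set.mem_Iio]; omega, ?_⟩
  have e : j = ((i.val + (c % t).toNat * m : ℕ) : ℤ) + ((t * m : ℕ) : ℤ) * (c / t) := by
    push_cast
    rw [Int.toNat_of_nonneg c0]
    have := Int.emod_add_mul_ediv c t
    linear_combination hc - (m : ℤ) * this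
  change (j : ZMod (t * m)) = _
  rw [e, Int.cast_add, Int.cast_mul, Int.cast_natCast, Int.cast_natCast, ZMod.natCast_self]
  simp

end LiftedGen

/-- Let `m ≥ 2` and `t ≥ 2`. The group homomorphism `ψ : B(Ã_{m−1}) → B(Ã_{tm−1})`
determined by `ψ(s_i) = s_i s_{i+m} s_{i+2m} ⋯ s_{i+(t−1)m}` for `i ∈ ℤ/m` is well defined
and injective. -/
theorem exists_injective_affineBraid_lift (m t : ℕ) (hm : 2 ≤ m) (ht : 2 ≤ t) :
    ∃ ψ : AffineBraidGroup m →* AffineBraidGroup (t * m),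
      Function.Injective ψ ∧
      ∀ i : ZMod m, ψ (affineBraidGen m i) = liftedGen m t i := by
  have htm : 2 ≤ t * m := by nlinarith
  let ψ : AffineBraidGroup m →* AffineBraidGroup (t * m) :=
    affineBraidLift (liftedGen m t) (fun hm' => liftedGen_braid hm' ht)
      fun _ _ _ => liftedGen_commute hm ht
  have hψ : (affineAction htm).comp ψ = affineAction hm := by
    refine affineBraid_hom_ext fun i => ?_
    rw [MonoidHom.comp_apply, affineBraidLift_gen, affineAction_liftedGen hm ht]
  refine ⟨ψ, ?_, fun i => affineBraidLift_gen i⟩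
  have h : Function.Injective ((affineAction htm).comp ψ) := hψ ▸ affineAction_injective hm
  exact Function.Injective.of_comp h
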